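/- arXiv:0909.1015 — 8 statements merged into one kernel-verified Lean document; each statement's English description precedes it below -/
import Mathlib

section
/- Inverse function theorem on complex neighbourhoods: Suppose f: Ω_h → ℂⁿ is analytic and ‖f − id‖_h ≤ ε < h/2. Then f has an analytic inverse φ: Ω_{h−2ε} → Ω_h (i.e., f(φ(z)) = z for all z ∈ Ω_{h−2ε}), and ‖φ − id‖_{h−2ε} ≤ ε. -/
/-!
Write `f = id + u` with `‖u‖ ≤ ε`. Solving `f w = z` means finding a fixed point of
`w ↦ z - u w`, which maps the closed ball `B̄(z, ε)` into itself. For `z ∈ Ω_{h-2ε}` a ball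
`B̄(z, 2ε + δ)` with `δ > 0` lies in `Ω_h`, so Cauchy's estimate on balls of radius `ε + δ` gives
`‖Du‖ ≤ ε / (ε + δ) < 1` on `B̄(z, ε)` (`norm_fderiv_le_of_closedBall`). The map is therefore a
contraction, and it has exactly one fixed point `φ z` in `B̄(z, ε)`.

Analyticity of `φ` is local. At `w = φ z` the derivative `1 + Du` is invertible by the Neumann
series, so `f` has an analytic local inverse `g` near `z` with `g z = w`. Any solution
`w' ∈ Ω_h` of `f w' = z'` satisfies `‖w' - z'‖ = ‖u w'‖ ≤ ε` automatically, so `g z'` lies in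
`B̄(z', ε)` and uniqueness forces `g = φ` near `z`.
-/

open scoped BigOperators
noncomputable section

/-- The sum-norm `|k| = Σᵢ |kᵢ|` of an integer vector `k ∈ ℤⁿ`. -/
def znorm {n : ℕ} (k : Fin n → ℤ) : ℝ := ∑ i, |(k i : ℝ)|

/-- The weighted norm `‖P‖ₛ = Σ_k ‖p_k‖ e^{|k| s}` of a vector field on the torus
given by its Fourier coefficients `p : ℤⁿ → ℂⁿ` (max-norm on `ℂⁿ`). -/
def wnorm {n : ℕ} (p : (Fin n → ℤ) → (Fin n → ℂ)) (s : ℝ) : ℝ :=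
  ∑' k, ‖p k‖ * Real.exp (znorm k * s)

/-- The complex strip `D_s = {θ : |Im θ| < s}` around the torus (max-norm). -/
def Dset (n : ℕ) (s : ℝ) : Set (Fin n → ℂ) := {θ | ‖fun i => (θ i).im‖ < s}

/-- The complex neighbourhood `Ω_h = {z ∈ ℂⁿ : |z − Ω| < h}` of `Ω ⊂ ℝⁿ` (max-norm). -/
def OmegaN {n : ℕ} (Ω : Set (Fin n → ℝ)) (h : ℝ) : Set (Fin n → ℂ) :=
  {z | ∃ ω ∈ Ω, ‖z - fun i => (ω i : ℂ)‖ < h}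

section Perturbation

open Metric Filter Topology
open scoped ContDiff

variable {E : Type*} [NormedAddCommGroup E] [NormedSpace ℂ E]

/-- Cauchy's estimate for the Fréchet derivative, by restriction to the complex line through `w`
in each direction. -/
lemma norm_fderiv_le_of_closedBall {u : E → E} {w : E} {r C : ℝ} (hr : 0 < r)
    (hC0 : 0 ≤ C) (hd : ∀ x ∈ closedBall w r, DifferentiableAt ℂ u x)
    (hC : ∀ x ∈ closedBall w r, ‖u x‖ ≤ C) : ‖fderiv ℂ u w‖ ≤ C / r := by
  refine ContinuousLinearMap.opNorm_le_bound _ (by positivity) fun v => ?_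
  rcases eq_or_ne v 0 with rfl | hv
  · simp
  have hv' : 0 < ‖v‖ := norm_pos_iff.2 hv
  have hR : 0 < r / ‖v‖ := by positivity
  have hmem : ∀ t ∈ closedBall (0 : ℂ) (r / ‖v‖), w + t • v ∈ closedBall w r := by
    intro t ht
    rw [mem_closedBall_zero_iff, le_div_iff₀ hv'] at ht
    simpa [mem_closedBall, dist_eq_norm, norm_smul] using ht
  have hline : ∀ t : ℂ, HasDerivAt (fun t : ℂ => w + t • v) v t := fun t => by
    simpa using ((hasDerivAt_id t).smul_const v).const_add w
  have hder : ∀ t ∈ closedBall (0 : ℂ) (r / ‖v‖),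
      HasDerivAt (fun t : ℂ => u (w + t • v)) (fderiv ℂ u (w + t • v) v) t := fun t ht =>
    (hd _ (hmem t ht)).hasFDerivAt.comp_hasDerivAt t (hline t)
  have h0 := (hder 0 (mem_closedBall_self hR.le)).deriv
  have key := Complex.norm_deriv_le_of_forall_mem_sphere_norm_le (c := 0) (C := C) hR
    (f := fun t : ℂ => u (w + t • v))
    (DifferentiableOn.diffContOnCl_ball (U := closedBall 0 (r / ‖v‖))
      (fun t ht => (hder t ht).differentiableAt.differentiableWithinAt) subset_rfl)
    (fun t ht => hC _ (hmem t (sphere_subset_closedBall ht)))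
  rw [h0] at key
  simp only [zero_smul, add_zero] at key
  calc ‖fderiv ℂ u w v‖ ≤ C / (r / ‖v‖) := key
    _ = C / r * ‖v‖ := by field_simp

/-- On `B̄(z, ε)` there is room `ε + δ` for Cauchy's estimate. -/
lemma norm_fderiv_sub_id_le {f : E → E} {z : E} {ε δ : ℝ} (hε : 0 ≤ ε) (hδ : 0 < δ)
    (hd : ∀ x ∈ closedBall z (2 * ε + δ), DifferentiableAt ℂ f x)
    (hC : ∀ x ∈ closedBall z (2 * ε + δ), ‖f x - x‖ ≤ ε) {w : E} (hw : w ∈ closedBall z ε) :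
    ‖fderiv ℂ (fun x => f x - x) w‖ ≤ ε / (ε + δ) := by
  have hsub : closedBall w (ε + δ) ⊆ closedBall z (2 * ε + δ) :=
    closedBall_subset_closedBall' (by rw [mem_closedBall] at hw; linarith)
  exact norm_fderiv_le_of_closedBall (by positivity) hε
    (fun x hx => (hd x (hsub hx)).sub differentiableAt_id) (fun x hx => hC x (hsub hx))

lemma lipschitz_sub_id {f : E → E} {z : E} {ε δ : ℝ} (hε : 0 ≤ ε) (hδ : 0 < δ)
    (hd : ∀ x ∈ closedBall z (2 * ε + δ), DifferentiableAt ℂ f x)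
    (hC : ∀ x ∈ closedBall z (2 * ε + δ), ‖f x - x‖ ≤ ε) {a b : E}
    (ha : a ∈ closedBall z ε) (hb : b ∈ closedBall z ε) :
    ‖(f b - b) - (f a - a)‖ ≤ ε / (ε + δ) * ‖b - a‖ :=
  (convex_closedBall z ε).norm_image_sub_le_of_norm_fderiv_le (𝕜 := ℂ)
    (f := fun x => f x - x)
    (fun x hx => (hd x (closedBall_subset_closedBall (by linarith) hx)).sub differentiableAt_id)
    (fun x hx => norm_fderiv_sub_id_le hε hδ hd hC hx) ha hb

lemma eq_of_apply_eq {f : E → E} {z : E} {ε δ : ℝ} (hε : 0 ≤ ε) (hδ : 0 < δ)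
    (hd : ∀ x ∈ closedBall z (2 * ε + δ), DifferentiableAt ℂ f x)
    (hC : ∀ x ∈ closedBall z (2 * ε + δ), ‖f x - x‖ ≤ ε) {a b : E}
    (ha : a ∈ closedBall z ε) (hb : b ∈ closedBall z ε) (hab : f a = f b) : a = b := by
  have h := lipschitz_sub_id hε hδ hd hC ha hb
  rw [hab, show f b - b - (f b - a) = -(b - a) by abel, norm_neg] at h
  have h1 : ε / (ε + δ) < 1 := by rw [div_lt_one (by positivity)]; linarith
  have h2 : ‖b - a‖ = 0 := by nlinarith [norm_nonneg (b - a)]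
  exact (sub_eq_zero.1 (norm_eq_zero.1 h2)).symm

lemma exists_preimage [CompleteSpace E] {f : E → E} {z : E} {ε δ : ℝ} (hε : 0 ≤ ε) (hδ : 0 < δ)
    (hd : ∀ x ∈ closedBall z (2 * ε + δ), DifferentiableAt ℂ f x)
    (hC : ∀ x ∈ closedBall z (2 * ε + δ), ‖f x - x‖ ≤ ε) :
    ∃ w ∈ closedBall z ε, f w = z := by
  have h1 : ε / (ε + δ) < 1 := by rw [div_lt_one (by positivity)]; linarith
  have hmaps : Set.MapsTo (fun w => z - (f w - w)) (closedBall z ε) (closedBall z ε) := by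
    intro w hw
    have := hC w (closedBall_subset_closedBall (by linarith) hw)
    rwa [mem_closedBall, dist_eq_norm, sub_sub_cancel_left, norm_neg]
  have hcontr : ContractingWith (ε / (ε + δ)).toNNReal
      (hmaps.restrict (fun w => z - (f w - w)) (closedBall z ε) (closedBall z ε)) := by
    refine ⟨by simpa using h1, LipschitzWith.of_dist_le_mul fun a b => ?_⟩
    rw [Real.coe_toNNReal _ (by positivity), Subtype.dist_eq, Subtype.dist_eq, dist_eq_norm,
      dist_eq_norm]
    have := lipschitz_sub_id hε hδ hd hC b.2 a.2
    simp only [Set.MapsTo.val_restrict_apply]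
    rwa [sub_sub_sub_cancel_left, norm_sub_rev]
  obtain ⟨w, hw, hfix, -⟩ := hcontr.exists_fixedPoint' isClosed_closedBall.isComplete hmaps
    (mem_closedBall_self hε) (edist_ne_top _ _)
  refine ⟨w, hw, ?_⟩
  have h2 : z - (f w - w) = w := hfix
  rw [sub_eq_iff_eq_add] at h2
  rw [h2]; abel

/-- A complex analytic map whose derivative is at distance less than `1` from the identity has
an analytic local right inverse. -/
lemma exists_analytic_rightInverse [CompleteSpace E] {f : E → E} {w : E}
    (hf : AnalyticAt ℂ f w) (h1 : ‖fderiv ℂ (fun x => f x - x) w‖ < 1) :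
    ∃ g : E → E, AnalyticAt ℂ g (f w) ∧ g (f w) = w ∧ ∀ᶠ y in 𝓝 (f w), f (g y) = y := by
  -- Neumann series: `1 - (-Du)` is a unit.
  let e : E ≃L[ℂ] E := ContinuousLinearEquiv.unitsEquiv ℂ E
    (Units.oneSub (-fderiv ℂ (fun x => f x - x) w) (by rwa [norm_neg]))
  have he : HasFDerivAt f (e : E →L[ℂ] E) w := by
    convert (hf.differentiableAt.sub differentiableAt_id).hasFDerivAt.add
      (hasFDerivAt_id (𝕜 := ℂ) w) using 1
    · ext x; simp
    · ext x
      simp only [e, ContinuousLinearEquiv.coe_coe, ContinuousLinearEquiv.unitsEquiv_apply,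
        Units.val_oneSub, sub_neg_eq_add]
      exact add_comm _ _
  have hcd : ContDiffAt ℂ ω f w := hf.contDiffAt
  have hn : (ω : WithTop ℕ∞) ≠ 0 := by simp
  have hs : HasStrictFDerivAt f (e : E →L[ℂ] E) w := hcd.hasStrictFDerivAt' he hn
  exact ⟨hs.localInverse f e w, (hcd.to_localInverse he hn).analyticAt,
    hs.localInverse_apply_image, hs.eventually_right_inverse⟩

end Perturbation

lemma isOpen_OmegaN {n : ℕ} (Ω : Set (Fin n → ℝ)) (h : ℝ) : IsOpen (OmegaN Ω h) := by
  have : OmegaN Ω h = ⋃ ω ∈ Ω, Metric.ball (fun i => (ω i : ℂ)) h := by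
    ext z
    simp [OmegaN, dist_eq_norm]
  rw [this]
  exact isOpen_biUnion fun _ _ => Metric.isOpen_ball

lemma exists_closedBall_subset_OmegaN {n : ℕ} {Ω : Set (Fin n → ℝ)} {h ε : ℝ} {z : Fin n → ℂ}
    (hz : z ∈ OmegaN Ω (h - 2 * ε)) :
    ∃ δ > 0, Metric.closedBall z (2 * ε + δ) ⊆ OmegaN Ω h := by
  obtain ⟨ω, hω, hlt⟩ := hz
  refine ⟨(h - 2 * ε - ‖z - fun i => (ω i : ℂ)‖) / 2, by linarith, fun x hx => ⟨ω, hω, ?_⟩⟩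
  rw [Metric.mem_closedBall, dist_eq_norm] at hx
  have := norm_sub_le_norm_sub_add_norm_sub x z (fun i => (ω i : ℂ))
  linarith

/-- **Inverse function theorem on complex neighbourhoods.**
If `f : Ω_h → ℂⁿ` is analytic and `‖f − id‖_h ≤ ε < h/2`, then `f` has an analytic
inverse `φ : Ω_{h−2ε} → Ω_h` (i.e. `f(φ(z)) = z` on `Ω_{h−2ε}`), and `‖φ − id‖_{h−2ε} ≤ ε`. -/
theorem inverse_function_on_neighbourhood {n : ℕ}
    (Ω : Set (Fin n → ℝ)) (hΩ : IsCompact Ω) (h ε : ℝ) (h0 : 0 < h)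
    (f : (Fin n → ℂ) → (Fin n → ℂ))
    (hf : AnalyticOnNhd ℂ f (OmegaN Ω h))
    (hfid : ∀ z ∈ OmegaN Ω h, ‖f z - z‖ ≤ ε)
    (hεh : ε < h / 2) :
    ∃ φ : (Fin n → ℂ) → (Fin n → ℂ),
      AnalyticOnNhd ℂ φ (OmegaN Ω (h - 2 * ε)) ∧
      Set.MapsTo φ (OmegaN Ω (h - 2 * ε)) (OmegaN Ω h) ∧
      (∀ z ∈ OmegaN Ω (h - 2 * ε), f (φ z) = z) ∧
      (∀ z ∈ OmegaN Ω (h - 2 * ε), ‖φ z - z‖ ≤ ε) := by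
  rcases Ω.eq_empty_or_nonempty with rfl | ⟨ω₀, hω₀⟩
  · exact ⟨id, by simp [OmegaN, AnalyticOnNhd, Set.MapsTo]⟩
  have hε : 0 ≤ ε := (norm_nonneg _).trans
    (hfid (fun i => (ω₀ i : ℂ)) ⟨ω₀, hω₀, by simpa using h0⟩)
  have hex : ∀ z ∈ OmegaN Ω (h - 2 * ε), ∃ w ∈ Metric.closedBall z ε, f w = z := by
    intro z hz
    obtain ⟨δ, hδ, hsub⟩ := exists_closedBall_subset_OmegaN hz
    exact exists_preimage hε hδ (fun x hx => (hf x (hsub hx)).differentiableAt)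
      (fun x hx => hfid x (hsub hx))
  choose! φ hφ hfφ using hex
  have hmaps : Set.MapsTo φ (OmegaN Ω (h - 2 * ε)) (OmegaN Ω h) := by
    intro z hz
    obtain ⟨δ, hδ, hsub⟩ := exists_closedBall_subset_OmegaN hz
    exact hsub (Metric.closedBall_subset_closedBall (by linarith) (hφ z hz))
  refine ⟨φ, fun z hz => ?_, hmaps, hfφ, fun z hz => by
    simpa [dist_eq_norm] using hφ z hz⟩
  obtain ⟨δ, hδ, hsub⟩ := exists_closedBall_subset_OmegaN hz
  have h1 : ε / (ε + δ) < 1 := by rw [div_lt_one (by positivity)]; linarith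
  obtain ⟨g, hg, hgz, hfg⟩ := exists_analytic_rightInverse (hf _ (hmaps hz))
    ((norm_fderiv_sub_id_le hε hδ (fun x hx => (hf x (hsub hx)).differentiableAt)
      (fun x hx => hfid x (hsub hx)) (hφ z hz)).trans_lt h1)
  rw [hfφ z hz] at hg hgz hfg
  refine hg.congr ?_
  have hgmem : ∀ᶠ y in nhds z, g y ∈ OmegaN Ω h :=
    hg.continuousAt.eventually_mem
      ((isOpen_OmegaN Ω h).mem_nhds (by rw [hgz]; exact hmaps hz))
  filter_upwards [hfg, hgmem, (isOpen_OmegaN Ω (h - 2 * ε)).mem_nhds hz] with y hy hgy hyΩ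
  obtain ⟨δ', hδ', hsub'⟩ := exists_closedBall_subset_OmegaN hyΩ
  refine eq_of_apply_eq hε hδ' (fun x hx => (hf x (hsub' hx)).differentiableAt)
    (fun x hx => hfid x (hsub' hx)) ?_ (hφ y hyΩ) (by rw [hy, hfφ y hyΩ])
  have := hfid _ hgy
  rwa [hy, norm_sub_rev, ← dist_eq_norm, ← Metric.mem_closedBall] at this
end
end

section
/- Lie bracket estimate in weighted norms: Let U and V be analytic vector fields on the torus 𝕋ⁿ with finite weighted norms ‖U‖_u and ‖V‖_v. Then for 0 < r < min{u, v}, the Lie bracket satisfies ‖[U,V]‖_r ≤ (1/e)(1/(u−r) + 1/(v−r)) ‖U‖_u ‖V‖_v. -/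
/-!
In Fourier coefficients `DU·V` is a convolution, `(DU·V)_l = Σ_{k+m=l} i ⟨k, v_m⟩ u_k`. Since
`|⟨k, v_m⟩| ≤ |k| ‖v_m‖` and `|k + m| ≤ |k| + |m|`, the weighted norm at `r` is dominated by the
double series `Σ_{k,m} |k| ‖u_k‖ e^{|k|r} ‖v_m‖ e^{|m|r}`. The factor `|k|` is absorbed by the loss
of width, `t e^{tr} ≤ e^{tu} / (e (u - r))` for every `t`, which is `1 + x ≤ eˣ` at
`x = t (u - r) - 1`. Summing the product series along the fibres `k + m = l` gives both the
summability and the bound of `wnorm_dirDeriv_le`; the bracket is then handled by the triangle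
inequality.
-/

open scoped BigOperators
noncomputable section

/-- Fourier coefficients of the directional derivative `DU·V`:
`(DU·V)_l = Σ_k i u_k ⟨k, v_{l−k}⟩`. -/
def dirDeriv {n : ℕ} (u v : (Fin n → ℤ) → (Fin n → ℂ)) : (Fin n → ℤ) → (Fin n → ℂ) :=
  fun l => ∑' k, (Complex.I * ∑ i, (k i : ℂ) * v (l - k) i) • u k

/-- Fourier coefficients of the Lie bracket `[U,V] = DV·U − DU·V`. -/
def lieCoeff {n : ℕ} (u v : (Fin n → ℤ) → (Fin n → ℂ)) : (Fin n → ℤ) → (Fin n → ℂ) :=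
  fun l => dirDeriv v u l - dirDeriv u v l

lemma znorm_nonneg {n : ℕ} (k : Fin n → ℤ) : 0 ≤ znorm k :=
  Finset.sum_nonneg fun _ _ => abs_nonneg _

lemma znorm_add_le {n : ℕ} (k m : Fin n → ℤ) : znorm (k + m) ≤ znorm k + znorm m := by
  unfold znorm
  rw [← Finset.sum_add_distrib]
  refine Finset.sum_le_sum fun i _ => ?_
  simpa using abs_add_le (k i : ℝ) (m i : ℝ)

/-- The Cauchy estimate in exponential form: a factor `t` costs `1 / (e (s - r))` when the
exponential weight is raised from `r` to `s`. -/
lemma mul_exp_le {t r s : ℝ} (h : r < s) :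
    t * Real.exp (t * r) ≤ 1 / Real.exp 1 * (1 / (s - r)) * Real.exp (t * s) := by
  have hd : 0 < s - r := sub_pos.2 h
  have key : t * (s - r) * Real.exp 1 ≤ Real.exp (t * (s - r)) := by
    have h1 := Real.add_one_le_exp (t * (s - r) - 1)
    rw [sub_add_cancel, Real.exp_sub, le_div_iff₀ (Real.exp_pos 1)] at h1
    exact h1
  have hs : Real.exp (t * s) = Real.exp (t * (s - r)) * Real.exp (t * r) := by
    rw [← Real.exp_add]; ring_nf
  rw [hs, div_mul_div_comm, one_mul, div_mul_eq_mul_div, one_mul,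
    le_div_iff₀ (mul_pos (Real.exp_pos 1) hd)]
  nlinarith [mul_le_mul_of_nonneg_right key (Real.exp_pos (t * r)).le]

lemma norm_dirDeriv_term_le {n : ℕ} (k : Fin n → ℤ) (w x : Fin n → ℂ) :
    ‖(Complex.I * ∑ i, (k i : ℂ) * w i) • x‖ ≤ znorm k * ‖w‖ * ‖x‖ := by
  rw [norm_smul, norm_mul, Complex.norm_I, one_mul]
  gcongr
  unfold znorm
  rw [Finset.sum_mul]
  refine (norm_sum_le _ _).trans (Finset.sum_le_sum fun i _ => ?_)
  rw [norm_mul, Complex.norm_intCast]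
  gcongr
  exact norm_le_pi_norm w i

/-- The reindexing `(l, k) ↦ (k, l - k)` that groups a double series over `(k, m)` by the
value `l = k + m`. -/
def convEquiv (G : Type*) [AddCommGroup G] : G × G ≃ G × G where
  toFun p := (p.2, p.1 - p.2)
  invFun q := (q.1 + q.2, q.1)
  left_inv p := by ext <;> simp
  right_inv q := by ext <;> simp

/-- The estimate for one directional derivative `DU·V`: only the width of the differentiated
field `U` enters the constant. Summability is part of the conclusion, so that the two halves
of the bracket can be added. -/
lemma wnorm_dirDeriv_le {n : ℕ} (U V : (Fin n → ℤ) → (Fin n → ℂ)) (u v r : ℝ)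
    (hru : r < u) (hrv : r < v) (hr0 : 0 < r)
    (hU : Summable fun k => ‖U k‖ * Real.exp (znorm k * u))
    (hV : Summable fun k => ‖V k‖ * Real.exp (znorm k * v)) :
    (Summable fun l => ‖dirDeriv U V l‖ * Real.exp (znorm l * r)) ∧
      wnorm (dirDeriv U V) r ≤
        1 / Real.exp 1 * (1 / (u - r)) * wnorm U u * wnorm V v := by
  set c : ℝ := 1 / Real.exp 1 * (1 / (u - r)) with hc
  have hc0 : 0 ≤ c := by
    have := sub_pos.2 hru
    positivity
  let a : (Fin n → ℤ) → ℝ := fun k => c * (‖U k‖ * Real.exp (znorm k * u))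
  let b : (Fin n → ℤ) → ℝ := fun k => ‖V k‖ * Real.exp (znorm k * v)
  have ha : HasSum a (c * wnorm U u) := hU.hasSum.mul_left c
  have hb : HasSum b (wnorm V v) := hV.hasSum
  have ha0 : ∀ k, 0 ≤ a k := fun k => by positivity
  have hb0 : ∀ k, 0 ≤ b k := fun k => by positivity
  have hprod : HasSum (fun p : (Fin n → ℤ) × (Fin n → ℤ) => a p.1 * b p.2)
      (c * wnorm U u * wnorm V v) :=
    ha.mul hb (ha.summable.mul_of_nonneg hb.summable ha0 hb0)
  have hconv : HasSum (fun p : (Fin n → ℤ) × (Fin n → ℤ) => a p.2 * b (p.1 - p.2))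
      (c * wnorm U u * wnorm V v) :=
    (convEquiv (Fin n → ℤ)).hasSum_iff.2 hprod
  have hfib : ∀ l, HasSum (fun k => a k * b (l - k)) (∑' k, a k * b (l - k)) :=
    fun l => (hconv.summable.prod_factor l).hasSum
  have hT := hconv.prod_fiberwise hfib
  have hterm : ∀ l k, ‖(Complex.I * ∑ i, (k i : ℂ) * V (l - k) i) • U k‖ ≤
      a k * b (l - k) * Real.exp (-(znorm l * r)) := by
    intro l k
    refine (norm_dirDeriv_term_le k (V (l - k)) (U k)).trans ?_
    have hl : znorm l ≤ znorm k + znorm (l - k) := by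
      simpa using znorm_add_le k (l - k)
    have h1 : (1 : ℝ) ≤ Real.exp (znorm k * r) * Real.exp (znorm (l - k) * r) *
        Real.exp (-(znorm l * r)) := by
      rw [← Real.exp_add, ← Real.exp_add]
      exact Real.one_le_exp (by nlinarith)
    have h2 : znorm k * Real.exp (znorm k * r) ≤ c * Real.exp (znorm k * u) := mul_exp_le hru
    have h3 : Real.exp (znorm (l - k) * r) ≤ Real.exp (znorm (l - k) * v) :=
      Real.exp_le_exp.2 (mul_le_mul_of_nonneg_left hrv.le (znorm_nonneg _))
    have hk := znorm_nonneg k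
    calc znorm k * ‖V (l - k)‖ * ‖U k‖
        ≤ znorm k * ‖V (l - k)‖ * ‖U k‖ * (Real.exp (znorm k * r) *
            Real.exp (znorm (l - k) * r) * Real.exp (-(znorm l * r))) :=
          le_mul_of_one_le_right (by positivity) h1
      _ = (‖U k‖ * (znorm k * Real.exp (znorm k * r))) *
            (‖V (l - k)‖ * Real.exp (znorm (l - k) * r)) * Real.exp (-(znorm l * r)) := by ring
      _ ≤ (‖U k‖ * (c * Real.exp (znorm k * u))) *
            (‖V (l - k)‖ * Real.exp (znorm (l - k) * v)) * Real.exp (-(znorm l * r)) := by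
          gcongr
      _ = a k * b (l - k) * Real.exp (-(znorm l * r)) := by simp only [a, b]; ring
  have hle : ∀ l, ‖dirDeriv U V l‖ * Real.exp (znorm l * r) ≤ ∑' k, a k * b (l - k) := by
    intro l
    have h := tsum_of_norm_bounded ((hfib l).mul_right (Real.exp (-(znorm l * r)))) (hterm l)
    rw [Real.exp_neg, ← div_eq_mul_inv, le_div_iff₀ (Real.exp_pos _)] at h
    exact h
  have hS : Summable fun l => ‖dirDeriv U V l‖ * Real.exp (znorm l * r) :=
    Summable.of_nonneg_of_le (fun l => by positivity) hle hT.summable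
  exact ⟨hS, hasSum_le hle hS.hasSum hT⟩

/-- **Lie bracket estimate in weighted norms.**
For analytic vector fields `U`, `V` on `𝕋ⁿ` with finite weighted norms `‖U‖_u`, `‖V‖_v`
and `0 < r < min{u,v}`,
`‖[U,V]‖_r ≤ (1/e)(1/(u−r) + 1/(v−r)) ‖U‖_u ‖V‖_v`. -/
theorem lie_bracket_weighted_estimate {n : ℕ}
    (U V : (Fin n → ℤ) → (Fin n → ℂ)) (u v r : ℝ)
    (hr0 : 0 < r) (hru : r < u) (hrv : r < v)
    (hU : Summable fun k => ‖U k‖ * Real.exp (znorm k * u))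
    (hV : Summable fun k => ‖V k‖ * Real.exp (znorm k * v)) :
    wnorm (lieCoeff U V) r ≤
      1 / Real.exp 1 * (1 / (u - r) + 1 / (v - r)) * wnorm U u * wnorm V v := by
  obtain ⟨hS1, h1⟩ := wnorm_dirDeriv_le V U v u r hrv hru hr0 hV hU
  obtain ⟨hS2, h2⟩ := wnorm_dirDeriv_le U V u v r hru hrv hr0 hU hV
  have hle : ∀ l, ‖lieCoeff U V l‖ * Real.exp (znorm l * r) ≤
      ‖dirDeriv V U l‖ * Real.exp (znorm l * r) + ‖dirDeriv U V l‖ * Real.exp (znorm l * r) := by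
    intro l
    rw [← add_mul]
    exact mul_le_mul_of_nonneg_right (norm_sub_le _ _) (Real.exp_pos _).le
  have hS : Summable fun l => ‖lieCoeff U V l‖ * Real.exp (znorm l * r) :=
    Summable.of_nonneg_of_le (fun l => by positivity) hle (hS1.add hS2)
  have h3 : wnorm (lieCoeff U V) r ≤ wnorm (dirDeriv V U) r + wnorm (dirDeriv U V) r :=
    hasSum_le hle hS.hasSum (hS1.hasSum.add hS2.hasSum)
  linear_combination h3 + h1 + h2
end
end

section
/- Infrared estimate on a larger domain: Let 0 < σ < s, τ ≥ 1, a = 1 − e^{−τσ}, and σ̃ = σ(1−a)/a. For P = Σ_{k∈ℤⁿ} p_k e^{i⟨k,θ⟩} with ‖P‖_s ≤ ε, the infrared part P̃ = Σ_{0<|k|<τ} (1 − (1−a)e^{|k|σ}) p_k e^{i⟨k,θ⟩} satisfies ‖P̃‖_{s+σ̃} ≤ aε; indeed sup_{0≤t≤τ} (1 − (1−a)e^{tσ})e^{tσ̃} = a, since the function t ↦ (1 − (1−a)e^{tσ})e^{tσ̃} is monotonically decreasing on [0, τ] and equals a at t = 0. -/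
/-!
Write `q = 1 - a = e^{-τσ} ∈ (0, 1)`. The weight `1 - q` on `-x q / (1 - q)` and the weight `q` on
`x` have barycentre `0`, so convexity of `exp` gives `1 ≤ q e^x + (1 - q) e^{-x q / (1 - q)}`
for every real `x` (`one_le_weighted_exp`). With `x = tσ` this is exactly
`(1 - (1 - a) e^{tσ}) e^{tσ̃} ≤ a` (`cutoff_mul_exp_le`), with equality at `t = 0`, so `a` is
the maximum. Applied with `t = |k|`, it bounds each weighted
Fourier coefficient of `P̃` by `a` times that of `P` (`irPart_term_le`), since the factor
`1 - (1 - a) e^{|k|σ}` is nonnegative for `|k| ≤ τ`. Summation over `k` gives the norm estimate.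
-/

open scoped BigOperators
noncomputable section

/-- The infrared part `P̃ = Σ_{0<|k|<τ} (1 − (1−a)e^{|k|σ}) p_k e^{i⟨k,θ⟩}`. -/
def irPart {n : ℕ} (p : (Fin n → ℤ) → (Fin n → ℂ)) (σ τ a : ℝ) : (Fin n → ℤ) → (Fin n → ℂ) :=
  fun k => if k ≠ 0 ∧ znorm k < τ then ((1 - (1 - a) * Real.exp (znorm k * σ)) : ℝ) • p k else 0

lemma one_le_weighted_exp {a : ℝ} (h0 : 0 < a) (h1 : a < 1) (x : ℝ) :
    1 ≤ (1 - a) * Real.exp x + a * Real.exp (-(x * (1 - a) / a)) := by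
  have h := convexOn_exp.2 (Set.mem_univ x) (Set.mem_univ (-(x * (1 - a) / a)))
    (sub_nonneg.2 h1.le) h0.le (sub_add_cancel 1 a)
  simp only [smul_eq_mul] at h
  have e : (1 - a) * x + a * -(x * (1 - a) / a) = 0 := by
    field_simp
    ring
  rwa [e, Real.exp_zero] at h

/-- The pointwise bound behind the estimate. It needs no restriction on `t`. -/
lemma cutoff_mul_exp_le {a : ℝ} (h0 : 0 < a) (h1 : a < 1) (σ t : ℝ) :
    (1 - (1 - a) * Real.exp (t * σ)) * Real.exp (t * (σ * (1 - a) / a)) ≤ a := by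
  have h := one_le_weighted_exp h0 h1 (t * σ)
  have e : t * σ * (1 - a) / a = t * (σ * (1 - a) / a) := by ring
  rw [e, Real.exp_neg] at h
  have hE := Real.exp_pos (t * (σ * (1 - a) / a))
  rw [← le_div_iff₀ hE, div_eq_mul_inv]
  linarith

lemma irPart_term_le {n : ℕ} (p : (Fin n → ℤ) → (Fin n → ℂ)) {s σ τ a : ℝ}
    (hσ : 0 < σ) (h0 : 0 < a) (h1 : a < 1) (ha : a = 1 - Real.exp (-(τ * σ))) (k : Fin n → ℤ) :
    ‖irPart p σ τ a k‖ * Real.exp (znorm k * (s + σ * (1 - a) / a)) ≤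
      a * (‖p k‖ * Real.exp (znorm k * s)) := by
  unfold irPart
  split_ifs with hk
  · have hc : 0 ≤ 1 - (1 - a) * Real.exp (znorm k * σ) := by
      rw [ha, sub_sub_cancel, ← Real.exp_add, sub_nonneg, Real.exp_le_one_iff]
      nlinarith [hk.2]
    rw [norm_smul, Real.norm_of_nonneg hc, mul_add, Real.exp_add]
    calc _ = ((1 - (1 - a) * Real.exp (znorm k * σ)) *
              Real.exp (znorm k * (σ * (1 - a) / a))) * (‖p k‖ * Real.exp (znorm k * s)) := by
            ring
      _ ≤ _ := mul_le_mul_of_nonneg_right (cutoff_mul_exp_le h0 h1 σ _) (by positivity)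
  · rw [norm_zero, zero_mul]
    positivity

/-- **Infrared estimate on a larger domain.**
Let `0 < σ < s`, `τ ≥ 1`, `a = 1 − e^{−τσ}`, `σ̃ = σ(1−a)/a`. If `‖P‖_s ≤ ε` then
`‖P̃‖_{s+σ̃} ≤ aε`; indeed `sup_{0≤t≤τ} (1 − (1−a)e^{tσ}) e^{tσ̃} = a`. -/
theorem infrared_estimate {n : ℕ}
    (p : (Fin n → ℤ) → (Fin n → ℂ)) (s σ τ a σt ε : ℝ)
    (hσ0 : 0 < σ) (hσs : σ < s) (hτ : 1 ≤ τ)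
    (ha : a = 1 - Real.exp (-(τ * σ)))
    (hσt : σt = σ * (1 - a) / a)
    (hsum : Summable fun k => ‖p k‖ * Real.exp (znorm k * s))
    (hpε : wnorm p s ≤ ε) :
    (Summable fun k => ‖irPart p σ τ a k‖ * Real.exp (znorm k * (s + σt))) ∧
    wnorm (irPart p σ τ a) (s + σt) ≤ a * ε ∧
    sSup ((fun t : ℝ => (1 - (1 - a) * Real.exp (t * σ)) * Real.exp (t * σt)) ''
      Set.Icc 0 τ) = a := by
  have hτσ : 0 < τ * σ := mul_pos (by linarith) hσ0
  have h0 : 0 < a := by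
    rw [ha, sub_pos, Real.exp_lt_one_iff]
    linarith
  have h1 : a < 1 := by
    rw [ha]
    linarith [Real.exp_pos (-(τ * σ))]
  subst hσt
  have hterm := irPart_term_le p (s := s) hσ0 h0 h1 ha
  have hS : Summable fun k =>
      ‖irPart p σ τ a k‖ * Real.exp (znorm k * (s + σ * (1 - a) / a)) :=
    Summable.of_nonneg_of_le (fun k => by positivity) hterm (hsum.mul_left a)
  refine ⟨hS, ?_, ?_⟩
  · calc wnorm (irPart p σ τ a) (s + σ * (1 - a) / a)
        ≤ ∑' k, a * (‖p k‖ * Real.exp (znorm k * s)) := hS.tsum_le_tsum hterm (hsum.mul_left a)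
      _ = a * wnorm p s := tsum_mul_left
      _ ≤ a * ε := mul_le_mul_of_nonneg_left hpε h0.le
  · refine IsGreatest.csSup_eq ⟨⟨0, ⟨le_rfl, by linarith⟩, by simp⟩, ?_⟩
    rintro _ ⟨t, -, rfl⟩
    exact cutoff_mul_exp_le h0 h1 σ t
end
end

section
/- Monotonicity of the cut-off factor: Let 0 < a < 1, σ > 0, τ ≥ 1 with a = 1 − e^{−τσ}, and set σ̃ = σ(1−a)/a. Then the function g(t) = (1 − (1−a)e^{tσ})e^{tσ̃} is monotonically decreasing on [0, τ], with g(0) = a. -/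
/-!
Since `σ + σ̃ = σ / a`, the derivative of `g` is
`g'(t) = σ̃ (1 - e^{tσ}) e^{tσ̃}`, which is nonpositive for `t ≥ 0` because `σ̃ ≥ 0` and
`e^{tσ} ≥ 1`. The mean value theorem then gives monotonicity.
-/

/-- **Monotonicity of the cut-off factor.**
For `0 < a < 1`, `σ > 0`, `τ ≥ 1` with `a = 1 − e^{−τσ}` and `σ̃ = σ(1−a)/a`,
the function `g(t) = (1 − (1−a)e^{tσ}) e^{tσ̃}` is monotonically decreasing
on `[0, τ]`, with `g(0) = a`. -/
theorem cutoff_factor_antitone (a σ τ : ℝ)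
    (ha0 : 0 < a) (ha1 : a < 1) (hσ : 0 < σ) (hτ : 1 ≤ τ)
    (ha : a = 1 - Real.exp (-(τ * σ))) :
    AntitoneOn
      (fun t : ℝ => (1 - (1 - a) * Real.exp (t * σ)) * Real.exp (t * (σ * (1 - a) / a)))
      (Set.Icc 0 τ) ∧
    (1 - (1 - a) * Real.exp (0 * σ)) * Real.exp (0 * (σ * (1 - a) / a)) = a := by
  constructor
  · have hderiv : ∀ t : ℝ, HasDerivAt
        (fun t : ℝ => (1 - (1 - a) * Real.exp (t * σ)) * Real.exp (t * (σ * (1 - a) / a)))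
        (σ * (1 - a) / a * (1 - Real.exp (t * σ)) * Real.exp (t * (σ * (1 - a) / a))) t := by
      intro t
      have hexp : ∀ c : ℝ, HasDerivAt (fun t : ℝ => Real.exp (t * c))
          (Real.exp (t * c) * c) t := fun c => by
        simpa using ((hasDerivAt_id t).mul_const c).exp
      have hs : a * (σ * (1 - a) / a) = σ * (1 - a) := by field_simp
      refine ((((hexp σ).const_mul (1 - a)).const_sub 1).mul
        (hexp (σ * (1 - a) / a))).congr_deriv ?_
      linear_combination Real.exp (t * σ) * Real.exp (t * (σ * (1 - a) / a)) * hs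
    refine antitoneOn_of_deriv_nonpos (convex_Icc 0 τ)
      (fun t _ => (hderiv t).continuousAt.continuousWithinAt)
      (fun t _ => (hderiv t).differentiableAt.differentiableWithinAt) fun t ht => ?_
    rw [interior_Icc] at ht
    rw [(hderiv t).deriv]
    have hcoef : 0 ≤ σ * (1 - a) / a :=
      div_nonneg (mul_nonneg hσ.le (sub_nonneg.2 ha1.le)) ha0.le
    have hone : 1 ≤ Real.exp (t * σ) := Real.one_le_exp (mul_nonneg ht.1.le hσ.le)
    exact mul_nonpos_of_nonpos_of_nonneg
      (mul_nonpos_of_nonneg_of_nonpos hcoef (sub_nonpos.2 hone)) (Real.exp_pos _).le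
  · simp
end

section
/- Solution of the homological equation: Under the hypotheses of the Step Lemma (α = 2 normalization, 0 < σ < s/2, τ ≥ 1, a = 1 − e^{−τσ}, σ̃ = σ(1−a)/a, h ≤ 1/Λ(τ), ‖P‖_{s,h} ≤ ε), the vector field F = Σ_{0<|k|<τ} (p̃_k / (i⟨k,ω⟩)) e^{i⟨k,θ⟩}, where p̃_k = (1 − (1−a)e^{|k|σ})p_k, solves the linearized equation [F, N] = P̃ − P°, where P° is the mean value of P̃, and satisfies ‖F‖_{s+σ̃,h} ≤ Δ(τ)‖P̃‖_{s+σ̃,h} ≤ Δ(τ)aε ≤ Λ(τ)σε. -/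
/-! The equation is solved mode by mode, so everything rests on two estimates for `0 < |k| < τ`.

* Small divisors: for `ω̄ ∈ Ω` with `|ω - ω̄| < h` one has `|⟨k, ω̄⟩| ≥ 2 / Δ(|k|) ≥ 2 / Δ(τ)`, while
  `|⟨k, ω - ω̄⟩| ≤ |k| h ≤ τ h ≤ 1 / Δ(τ)`. Hence `|⟨k, ω⟩| ≥ 1 / Δ(τ)` (`small_divisor`).
* Infrared weights: `0 ≤ 1 - (1 - a) e^{|k|σ} ≤ a e^{-|k|σ̃}` (`ir_weight_nonneg`, `ir_weight_le`).
  The lower bound is `|k| ≤ τ` and `1 - a = e^{-τσ}`. The upper bound holds because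
  `u = (1 - (1 - a) x) / a` with `x = e^{tσ}` satisfies `u - 1 = (1 - x) (1 - a) / a ≤ -t σ̃`,
  and `u ≤ e^{u - 1}`.

Summing over `k` gives the norm estimates; the series for `P̃` and `F` converge by comparison with
that of `P`. The last inequality is `a = 1 - e^{-τσ} ≤ τσ` together with `ε ≥ ‖P‖ ≥ 0`. -/

open scoped BigOperators
noncomputable section

/-- A Rüssmann approximation function `Δ : [1,∞) → [1,∞)`: continuous, increasing,
unbounded, with `Δ(1) = 1` and `∫₁^∞ log Δ(t)/t² dt < ∞`. -/
structure IsApproxFn (Δ : ℝ → ℝ) : Prop where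
  mono : MonotoneOn Δ (Set.Ici 1)
  cont : ContinuousOn Δ (Set.Ici 1)
  unbdd : ∀ M : ℝ, ∃ t, 1 ≤ t ∧ M ≤ Δ t
  one_le : ∀ t, 1 ≤ t → 1 ≤ Δ t
  at_one : Δ 1 = 1
  conv : MeasureTheory.IntegrableOn (fun t => Real.log (Δ t) / t ^ 2) (Set.Ici (1:ℝ))

/-- The solution `F = Σ_{0<|k|<τ} (p̃_k/(i⟨k,ω⟩)) e^{i⟨k,θ⟩}` of the homological equation. -/
def homolSol {n : ℕ} (pt : (Fin n → ℤ) → (Fin n → ℂ)) (ω : Fin n → ℂ) (τ : ℝ) :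
    (Fin n → ℤ) → (Fin n → ℂ) :=
  fun k => if k ≠ 0 ∧ znorm k < τ then (Complex.I * ∑ i, (k i : ℂ) * ω i)⁻¹ • pt k else 0

lemma one_le_znorm {n : ℕ} {k : Fin n → ℤ} (hk : k ≠ 0) : 1 ≤ znorm k := by
  obtain ⟨i, hi⟩ := Function.ne_iff.mp hk
  have h1 : (1 : ℝ) ≤ |(k i : ℝ)| := by exact_mod_cast Int.one_le_abs hi
  exact h1.trans (Finset.single_le_sum (f := fun i => |(k i : ℝ)|)
    (fun _ _ => abs_nonneg _) (Finset.mem_univ i))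

/-- Duality of the sum-norm and the max-norm. -/
lemma norm_pairing_le {n : ℕ} (k : Fin n → ℤ) (z : Fin n → ℂ) :
    ‖∑ i, (k i : ℂ) * z i‖ ≤ znorm k * ‖z‖ := by
  rw [znorm, Finset.sum_mul]
  refine norm_sum_le_of_le _ fun i _ => ?_
  rw [norm_mul, Complex.norm_intCast]
  exact mul_le_mul_of_nonneg_left (norm_le_pi_norm z i) (abs_nonneg _)

/-- The diophantine condition on `Ω` survives, with `2` replaced by `1`, on the complex
neighbourhood `Ω_h` for the modes below the cutoff `τ`. -/
lemma small_divisor {n : ℕ} {Δ : ℝ → ℝ} (hΔ : IsApproxFn Δ) {Ω : Set (Fin n → ℝ)}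
    (hdio : ∀ ω ∈ Ω, ∀ k : Fin n → ℤ, k ≠ 0 → 2 / Δ (znorm k) ≤ |∑ i, (k i : ℝ) * ω i|)
    {τ h : ℝ} (hτ : 1 ≤ τ) (hh : h ≤ 1 / (τ * Δ τ))
    {ω : Fin n → ℂ} (hω : ω ∈ OmegaN Ω h) {k : Fin n → ℤ} (hk : k ≠ 0) (hkτ : znorm k < τ) :
    1 / Δ τ ≤ ‖∑ i, (k i : ℂ) * ω i‖ := by
  obtain ⟨w, hw, hwh⟩ := hω
  have hk1 := one_le_znorm hk
  have hΔk : 1 ≤ Δ (znorm k) := hΔ.one_le _ hk1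
  have hmono : Δ (znorm k) ≤ Δ τ := hΔ.mono hk1 hτ hkτ.le
  have hΔτ : 0 < Δ τ := by linarith
  have h1 : 2 / Δ τ ≤ |∑ i, (k i : ℝ) * w i| :=
    (div_le_div_of_nonneg_left (by norm_num) (by linarith) hmono).trans (hdio w hw k hk)
  have h2 : ‖∑ i, (k i : ℂ) * (w i : ℂ)‖ = |∑ i, (k i : ℝ) * w i| := by
    rw [← Real.norm_eq_abs, ← Complex.norm_real]
    push_cast
    rfl
  have h3 : ‖∑ i, (k i : ℂ) * (ω - fun i => (w i : ℂ)) i‖ ≤ 1 / Δ τ := by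
    refine (norm_pairing_le k _).trans ?_
    calc znorm k * ‖ω - fun i => (w i : ℂ)‖ ≤ τ * (1 / (τ * Δ τ)) :=
          mul_le_mul hkτ.le (hwh.le.trans hh) (norm_nonneg _) (by linarith)
      _ = 1 / Δ τ := by field_simp
  have h4 : ∑ i, (k i : ℂ) * (w i : ℂ) =
      ∑ i, (k i : ℂ) * ω i - ∑ i, (k i : ℂ) * (ω - fun i => (w i : ℂ)) i := by
    rw [← Finset.sum_sub_distrib]
    refine Finset.sum_congr rfl fun i _ => ?_
    simp only [Pi.sub_apply]
    ring
  have h5 := norm_sub_le (∑ i, (k i : ℂ) * ω i) (∑ i, (k i : ℂ) * (ω - fun i => (w i : ℂ)) i)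
  rw [← h4, h2] at h5
  have h6 : 2 / Δ τ = 1 / Δ τ + 1 / Δ τ := by ring
  linarith

lemma ir_weight_nonneg {σ τ a t : ℝ} (hσ : 0 < σ) (ha : a = 1 - Real.exp (-(τ * σ)))
    (ht : t ≤ τ) : 0 ≤ 1 - (1 - a) * Real.exp (t * σ) := by
  have h1 : (1 - a) * Real.exp (t * σ) = Real.exp ((t - τ) * σ) := by
    rw [ha, sub_sub_cancel, ← Real.exp_add]
    ring_nf
  have h2 : Real.exp ((t - τ) * σ) ≤ 1 :=
    Real.exp_le_one_iff.mpr (mul_nonpos_of_nonpos_of_nonneg (by linarith) hσ.le)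
  linarith

lemma ir_weight_le {σ a σt : ℝ} (ha0 : 0 < a) (ha1 : a ≤ 1) (hσt : σt = σ * (1 - a) / a)
    (t : ℝ) : 1 - (1 - a) * Real.exp (t * σ) ≤ a * Real.exp (-(t * σt)) := by
  have hx := Real.add_one_le_exp (t * σ)
  have hu := Real.add_one_le_exp (-(t * σt))
  have h1 : a * σt = σ * (1 - a) := by rw [hσt]; field_simp
  have h2 := mul_le_mul_of_nonneg_left hx (sub_nonneg.mpr ha1)
  have h3 := mul_le_mul_of_nonneg_left hu ha0.le
  have h4 : a * (-(t * σt) + 1) = a - t * (σ * (1 - a)) := by rw [← h1]; ring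
  linarith

/-- **Solution of the homological equation.**
Under the hypotheses of the Step Lemma (`α = 2` normalization, `0 < σ < s/2`, `τ ≥ 1`,
`a = 1 − e^{−τσ}`, `σ̃ = σ(1−a)/a`, `h ≤ 1/Λ(τ)`, `‖P‖_{s,h} ≤ ε`), for every `ω ∈ Ω_h`
the vector field `F = Σ_{0<|k|<τ} (p̃_k/(i⟨k,ω⟩)) e^{i⟨k,θ⟩}` solves the linearized
equation `[F,N] = P̃ − P°` (in Fourier modes: `i⟨k,ω⟩ F_k = p̃_k`, the mean value `P°`
of `P̃` being subtracted in the zeroth mode), and satisfies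
`‖F‖_{s+σ̃,h} ≤ Δ(τ)‖P̃‖_{s+σ̃,h} ≤ Δ(τ)aε ≤ Λ(τ)σε`. -/
theorem homological_equation {n : ℕ} (Δ : ℝ → ℝ) (hΔ : IsApproxFn Δ)
    (Ω : Set (Fin n → ℝ)) (hΩ : IsCompact Ω)
    (hdio : ∀ ω ∈ Ω, ∀ k : Fin n → ℤ, k ≠ 0 → 2 / Δ (znorm k) ≤ |∑ i, (k i : ℝ) * ω i|)
    (s σ τ h ε a σt : ℝ)
    (hσ0 : 0 < σ) (hσs : σ < s / 2) (hτ : 1 ≤ τ)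
    (ha : a = 1 - Real.exp (-(τ * σ))) (hσt : σt = σ * (1 - a) / a)
    (h0 : 0 < h) (hh : h ≤ 1 / (τ * Δ τ))
    (p : (Fin n → ℂ) → (Fin n → ℤ) → (Fin n → ℂ))
    (hp : ∀ ω ∈ OmegaN Ω h,
      (Summable fun k => ‖p ω k‖ * Real.exp (znorm k * s)) ∧ wnorm (p ω) s ≤ ε) :
    ∀ ω ∈ OmegaN Ω h,
      (∀ k : Fin n → ℤ,
        (Complex.I * ∑ i, (k i : ℂ) * ω i) • homolSol (irPart (p ω) σ τ a) ω τ k =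
          irPart (p ω) σ τ a k) ∧
      wnorm (homolSol (irPart (p ω) σ τ a) ω τ) (s + σt) ≤
        Δ τ * wnorm (irPart (p ω) σ τ a) (s + σt) ∧
      Δ τ * wnorm (irPart (p ω) σ τ a) (s + σt) ≤ Δ τ * (a * ε) ∧
      Δ τ * (a * ε) ≤ τ * Δ τ * σ * ε := by
  intro ω hω
  obtain ⟨hsum, hnorm⟩ := hp ω hω
  have hΔτ : 0 < Δ τ := lt_of_lt_of_le one_pos (hΔ.one_le τ hτ)
  have hτσ : 0 < τ * σ := by positivity
  have ha0 : 0 < a := by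
    have : Real.exp (-(τ * σ)) < 1 := Real.exp_lt_one_iff.mpr (by linarith)
    linarith
  have ha1 : a ≤ 1 := by
    have := Real.exp_pos (-(τ * σ))
    linarith
  have haτ : a ≤ τ * σ := by
    have := Real.add_one_le_exp (-(τ * σ))
    linarith
  have hε : 0 ≤ ε :=
    (tsum_nonneg fun k => mul_nonneg (norm_nonneg _) (Real.exp_pos _).le).trans hnorm
  have hdiv : ∀ k : Fin n → ℤ, k ≠ 0 → znorm k < τ → 1 / Δ τ ≤ ‖∑ i, (k i : ℂ) * ω i‖ :=
    fun k hk hkτ => small_divisor hΔ hdio hτ hh hω hk hkτ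
  have hP : ∀ k, ‖irPart (p ω) σ τ a k‖ * Real.exp (znorm k * (s + σt)) ≤
      a * (‖p ω k‖ * Real.exp (znorm k * s)) := by
    intro k
    by_cases hk : k ≠ 0 ∧ znorm k < τ
    · have hw := ir_weight_le ha0 ha1 hσt (znorm k)
      rw [irPart, if_pos hk, norm_smul, Real.norm_eq_abs,
        abs_of_nonneg (ir_weight_nonneg hσ0 ha hk.2.le)]
      calc (1 - (1 - a) * Real.exp (znorm k * σ)) * ‖p ω k‖ * Real.exp (znorm k * (s + σt))
          ≤ a * Real.exp (-(znorm k * σt)) * ‖p ω k‖ * Real.exp (znorm k * (s + σt)) := by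
            gcongr
        _ = a * (‖p ω k‖ *
              (Real.exp (-(znorm k * σt)) * Real.exp (znorm k * (s + σt)))) := by ring
        _ = a * (‖p ω k‖ * Real.exp (znorm k * s)) := by
            rw [← Real.exp_add]
            ring_nf
    · rw [irPart, if_neg hk, norm_zero, zero_mul]
      positivity
  have hF : ∀ k, ‖homolSol (irPart (p ω) σ τ a) ω τ k‖ * Real.exp (znorm k * (s + σt)) ≤
      Δ τ * (‖irPart (p ω) σ τ a k‖ * Real.exp (znorm k * (s + σt))) := by
    intro k
    by_cases hk : k ≠ 0 ∧ znorm k < τ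
    · have hinv : ‖∑ i, (k i : ℂ) * ω i‖⁻¹ ≤ Δ τ := by
        have := inv_anti₀ (by positivity) (hdiv k hk.1 hk.2)
        rwa [one_div, inv_inv] at this
      rw [homolSol, if_pos hk, norm_smul, norm_inv, norm_mul, Complex.norm_I, one_mul, mul_assoc]
      gcongr
    · rw [homolSol, if_neg hk, norm_zero, zero_mul]
      positivity
  have hPsum : Summable fun k => ‖irPart (p ω) σ τ a k‖ * Real.exp (znorm k * (s + σt)) :=
    Summable.of_nonneg_of_le (fun k => by positivity) hP (hsum.mul_left a)
  have hFsum : Summable fun k =>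
      ‖homolSol (irPart (p ω) σ τ a) ω τ k‖ * Real.exp (znorm k * (s + σt)) :=
    Summable.of_nonneg_of_le (fun k => by positivity) hF (hPsum.mul_left _)
  refine ⟨fun k => ?_, ?_, ?_, ?_⟩
  · by_cases hk : k ≠ 0 ∧ znorm k < τ
    · have hne : (∑ i, (k i : ℂ) * ω i) ≠ 0 :=
        norm_pos_iff.mp (lt_of_lt_of_le (by positivity) (hdiv k hk.1 hk.2))
      rw [homolSol, if_pos hk, smul_inv_smul₀ (mul_ne_zero Complex.I_ne_zero hne)]
    · rw [homolSol, irPart, if_neg hk, if_neg hk, smul_zero]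
  · rw [wnorm, wnorm, ← tsum_mul_left]
    exact hFsum.tsum_le_tsum hF (hPsum.mul_left _)
  · refine mul_le_mul_of_nonneg_left ?_ hΔτ.le
    calc wnorm (irPart (p ω) σ τ a) (s + σt) ≤ a * wnorm (p ω) s := by
          rw [wnorm, wnorm, ← tsum_mul_left]
          exact hPsum.tsum_le_tsum hP (hsum.mul_left a)
      _ ≤ a * ε := mul_le_mul_of_nonneg_left hnorm ha0.le
  · calc Δ τ * (a * ε) ≤ Δ τ * (τ * σ * ε) := by gcongr
      _ = τ * Δ τ * σ * ε := by ring
end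
end

section
/- Conjugation identity: Let N be a constant vector field on 𝕋ⁿ, P̃ an analytic vector field, P° its mean value, and F an analytic vector field solving [F, N] = P̃ − P°, generating a flow F_t for 0 ≤ t ≤ 1 with time-1-map Φ = F₁. Then Φ^*(N + P̃) = N + P° + ∫₀¹ F_t^*[tP̃ + (1−t)P°, F] dt. -/
/-!
Put `V t = ω + t P̃ + (1 - t) P°` and `A t = D(ft t)(θ)`, so that the pullback of `V t` under the
flow is `W t = (A t)⁻¹ (V t (ft t θ))`. Differentiating the flow equation in `θ` gives the
variational equation `A' = DF(ft t θ) ∘ A` (`hasDerivAt_fderiv_flow`; this is where equality of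
mixed partial derivatives enters). Hence `A W' = (V t ∘ ft)' - DF(ft t θ) (V t (ft t θ))`
(`hasDerivAt_inverse_apply`), that is, `W' = F_t^*(∂ₜ V + [V, F])`.
The homological equation says `[ω, F] = -(P̃ - P°) = -∂ₜ V`, so these two terms cancel and
`W' = F_t^*[tP̃ + (1 - t)P°, F] = Q t`. Integrating over `[0, 1]` from `W 0 = ω + P°` to
`W 1 = Φ^*(ω + P̃)` yields the identity.
-/

open scoped BigOperators
noncomputable section

/-- The Lie bracket `[U,V] = DU·V − DV·U` of vector fields on `ℝⁿ`
(the convention under which `F_t^*V` expands as `Σ tⁿ/n! V_n`, `V_n = [V_{n−1},F]`). -/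
def lieVF {n : ℕ} (U V : (Fin n → ℝ) → (Fin n → ℝ)) : (Fin n → ℝ) → (Fin n → ℝ) :=
  fun θ => fderiv ℝ U θ (V θ) - fderiv ℝ V θ (U θ)

/-- The variational equation: the space derivative of a `C²` flow of `F` solves the linearization
of the flow equation. -/
lemma hasDerivAt_fderiv_flow {E : Type*} [NormedAddCommGroup E] [NormedSpace ℝ E]
    {F : E → E} (hF : Differentiable ℝ F) {ft : ℝ → E → E}
    (hode : ∀ t x, HasDerivAt (fun u => ft u x) (F (ft t x)) t)
    (hsm : ContDiff ℝ 2 (fun q : ℝ × E => ft q.1 q.2)) (t : ℝ) (x : E) :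
    HasDerivAt (fun s => fderiv ℝ (ft s) x)
      ((fderiv ℝ F (ft t x)).comp (fderiv ℝ (ft t) x)) t := by
  set Ψ : ℝ × E → E := fun q => ft q.1 q.2 with hΨ
  have hd : Differentiable ℝ Ψ := hsm.differentiable (by norm_num)
  have hd2 : Differentiable ℝ (fderiv ℝ Ψ) :=
    (hsm.fderiv_right (m := 1) (by norm_num)).differentiable (by norm_num)
  have hspace : ∀ s y, fderiv ℝ (ft s) y
      = (fderiv ℝ Ψ (s, y)).comp (ContinuousLinearMap.inr ℝ ℝ E) := fun s y =>
    ((hd (s, y)).hasFDerivAt.comp y (hasFDerivAt_prodMk_right s y)).fderiv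
  have htime : ∀ q : ℝ × E, fderiv ℝ Ψ q (1, 0) = F (Ψ q) := fun q =>
    (HasFDerivAt.comp_hasDerivAt (l := Ψ) (f := fun s => (s, q.2)) q.1 (hd q).hasFDerivAt
      ((hasDerivAt_id q.1).prodMk (hasDerivAt_const q.1 q.2))).unique (hode q.1 q.2)
  -- Differentiate the flow equation `htime` in an arbitrary direction `w`.
  have hmixed : ∀ w, fderiv ℝ (fderiv ℝ Ψ) (t, x) w (1, 0)
      = fderiv ℝ F (ft t x) (fderiv ℝ Ψ (t, x) w) := by
    intro w
    have h1 : HasFDerivAt (fun q => fderiv ℝ Ψ q (1, 0)) _ (t, x) :=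
      (hd2 (t, x)).hasFDerivAt.clm_apply (hasFDerivAt_const ((1 : ℝ), (0 : E)) (t, x))
    have h2 : HasFDerivAt (fun q => F (Ψ q)) _ (t, x) :=
      (hF (Ψ (t, x))).hasFDerivAt.comp (t, x) (hd (t, x)).hasFDerivAt
    have h3 := h1.unique (by simpa only [htime] using h2)
    simpa using DFunLike.congr_fun h3 w
  have hsymm : IsSymmSndFDerivAt ℝ Ψ (t, x) :=
    hsm.contDiffAt.isSymmSndFDerivAt (by simp)
  have hA : HasDerivAt (fun s => (fderiv ℝ Ψ (s, x)).comp (ContinuousLinearMap.inr ℝ ℝ E))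
      ((fderiv ℝ (fderiv ℝ Ψ) (t, x) (1, 0)).comp (ContinuousLinearMap.inr ℝ ℝ E)) t := by
    have h1 : HasDerivAt (fun s => fderiv ℝ Ψ (s, x)) (fderiv ℝ (fderiv ℝ Ψ) (t, x) (1, 0)) t :=
      (hd2 (t, x)).hasFDerivAt.comp_hasDerivAt t
        ((hasDerivAt_id t).prodMk (hasDerivAt_const t x))
    simpa using h1.clm_comp (hasDerivAt_const t (ContinuousLinearMap.inr ℝ ℝ E))
  simp only [hspace]
  convert hA using 1
  ext v
  simp only [ContinuousLinearMap.comp_apply]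
  rw [hsymm.eq, hmixed]

/-- If `A' t = B (A t)` and `A t` is invertible, then `A⁻¹ y` has as derivative at `t`
the vector `q` determined by `A q = y' - B y`. -/
lemma hasDerivAt_inverse_apply {E : Type*} [NormedAddCommGroup E] [NormedSpace ℝ E]
    [CompleteSpace E] {A : ℝ → E →L[ℝ] E} {B : E →L[ℝ] E} {y : ℝ → E} {y' q : E} {t : ℝ}
    (hA : HasDerivAt A (B.comp (A t)) t) (hbij : Function.Bijective (A t))
    (hy : HasDerivAt y y' t) (hq : A t q = y' - B (y t)) :
    HasDerivAt (fun s => Ring.inverse (A s) (y s)) q t := by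
  obtain ⟨u, hu⟩ : IsUnit (A t) := ContinuousLinearMap.isUnit_iff_bijective.2 hbij
  have hinv := hasFDerivAt_ringInverse (𝕜 := ℝ) u
  rw [hu] at hinv
  have h := (hinv.comp_hasDerivAt t hA).clm_apply hy
  have hcancel : ∀ v, A t ((↑u⁻¹ : E →L[ℝ] E) v) = v := fun v => by
    rw [← hu, ← mul_apply_eq_comp, u.mul_inv, one_apply_eq_self]
  refine h.congr_deriv (hbij.1 ?_)
  have hui : Ring.inverse (A t) = ↑u⁻¹ := by rw [← hu, Ring.inverse_unit]
  simp [hq, hui, hcancel]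
  abel

/-- **Conjugation identity.**
Let `N = ω` be a constant vector field on `𝕋ⁿ`, `P̃` an analytic vector field with mean
value `P°`, and `F` an analytic vector field solving `[F,N] = P̃ − P°`, generating a flow
`F_t` with time-1-map `Φ = F₁`. Then `Φ^*(N + P̃) = N + P° + ∫₀¹ F_t^*[tP̃ + (1−t)P°, F] dt`.
Pullbacks `W = F_t^*V` are encoded via the pushforward relation
`DF_t(θ)·W(θ) = V(F_t(θ))`. -/
theorem conjugation_identity {n : ℕ}
    (ω P0 : Fin n → ℝ)
    (Pt F : (Fin n → ℝ) → (Fin n → ℝ))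
    (hPt : ContDiff ℝ ⊤ Pt) (hF : ContDiff ℝ ⊤ F)
    (hPtper : ∀ (θ : Fin n → ℝ) (k : Fin n → ℤ),
      Pt (fun i => θ i + 2 * Real.pi * (k i : ℝ)) = Pt θ)
    (hFper : ∀ (θ : Fin n → ℝ) (k : Fin n → ℤ),
      F (fun i => θ i + 2 * Real.pi * (k i : ℝ)) = F θ)
    -- `P°` is the mean value of `P̃` over the torus
    (hmean : ∀ i, P0 i =
      ((2 * Real.pi) ^ n)⁻¹ * ∫ θ in Set.Icc (0 : Fin n → ℝ) (fun _ => 2 * Real.pi), Pt θ i)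
    -- `F` solves the homological equation `[F, N] = P̃ − P°`
    (hhom : ∀ θ : Fin n → ℝ, lieVF F (fun _ => ω) θ = fun i => Pt θ i - P0 i)
    -- `ft` is the flow of `F`
    (ft : ℝ → (Fin n → ℝ) → (Fin n → ℝ))
    (hft0 : ∀ θ, ft 0 θ = θ)
    (hftode : ∀ (t : ℝ) (θ : Fin n → ℝ), HasDerivAt (fun u => ft u θ) (F (ft t θ)) t)
    (hftsmooth : ContDiff ℝ (⊤ : ℕ∞) (fun q : ℝ × (Fin n → ℝ) => ft q.1 q.2))
    (hftbij : ∀ t ∈ Set.Icc (0:ℝ) 1, ∀ θ, Function.Bijective (fderiv ℝ (ft t) θ))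
    -- `Q t = F_t^*[tP̃ + (1−t)P°, F]`, the pullback of the bracket under the flow
    (Q : ℝ → (Fin n → ℝ) → (Fin n → ℝ))
    (hQ : ∀ t ∈ Set.Icc (0:ℝ) 1, ∀ θ,
      fderiv ℝ (ft t) θ (Q t θ) =
        lieVF (fun x => fun i => t * Pt x i + (1 - t) * P0 i) F (ft t θ))
    (hQint : ∀ θ, IntervalIntegrable (fun t => Q t θ) MeasureTheory.volume 0 1) :
    -- `Φ^*(N + P̃) = N + P° + ∫₀¹ F_t^*[tP̃ + (1−t)P°, F] dt`, with `Φ = F₁`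
    ∀ θ : Fin n → ℝ,
      fderiv ℝ (ft 1) θ (fun i => ω i + P0 i + (∫ t in (0:ℝ)..1, Q t θ) i) =
        fun i => ω i + Pt (ft 1 θ) i := by
  intro θ
  have hFd : Differentiable ℝ F := hF.differentiable (by simp)
  have hPd : Differentiable ℝ Pt := hPt.differentiable (by simp)
  -- The interpolated field `ω + t P̃ + (1 - t) P°` along the orbit of `θ`.
  set y : ℝ → Fin n → ℝ := fun t => ω + (t • Pt (ft t θ) + (1 - t) • P0) with hy
  have hderiv : ∀ t ∈ Set.uIcc (0 : ℝ) 1,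
      HasDerivAt (fun s => Ring.inverse (fderiv ℝ (ft s) θ) (y s)) (Q t θ) t := by
    intro t ht
    rw [Set.uIcc_of_le zero_le_one] at ht
    have hPft : HasDerivAt (fun s => Pt (ft s θ)) (fderiv ℝ Pt (ft t θ) (F (ft t θ))) t :=
      (hPd (ft t θ)).hasFDerivAt.comp_hasDerivAt t (hftode t θ)
    have hy' : HasDerivAt y _ t :=
      (((hasDerivAt_id t).smul hPft).add
        (((hasDerivAt_const t (1 : ℝ)).sub (hasDerivAt_id t)).smul_const P0)).const_add ω
    refine hasDerivAt_inverse_apply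
      (hasDerivAt_fderiv_flow hFd hftode (contDiff_infty.1 hftsmooth 2) t θ)
      (hftbij t ht θ) hy' ?_
    have hN : fderiv ℝ F (ft t θ) ω = Pt (ft t θ) - P0 := by
      have h := hhom (ft t θ)
      simp only [lieVF, fderiv_fun_const, Pi.zero_apply, zero_apply,
        sub_zero] at h
      exact h
    have hV : fderiv ℝ (fun x => fun i => t * Pt x i + (1 - t) * P0 i) (ft t θ)
        = t • fderiv ℝ Pt (ft t θ) :=
      (((hPd (ft t θ)).hasFDerivAt.const_smul t).add_const ((1 - t) • P0)).fderiv
    have hval : (fun i => t * Pt (ft t θ) i + (1 - t) * P0 i)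
        = t • Pt (ft t θ) + (1 - t) • P0 := rfl
    rw [hQ t ht θ, lieVF, hV, hval]
    simp only [hy, map_add, hN, id]
    simp only [smul_apply]
    module
  have hint := intervalIntegral.integral_eq_sub_of_hasDerivAt hderiv (hQint θ)
  have hid : fderiv ℝ (ft 0) θ = 1 := by
    rw [show ft 0 = id from funext hft0, fderiv_id]; rfl
  have hvec : (fun i => ω i + P0 i + (∫ t in (0:ℝ)..1, Q t θ) i)
      = Ring.inverse (fderiv ℝ (ft 1) θ) (y 1) := by
    have h0 : y 0 = ω + P0 := by simp [hy]
    change ω + P0 + (∫ t in (0:ℝ)..1, Q t θ) = _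
    rw [hint, hid, Ring.inverse_one, one_apply_eq_self, h0]
    abel
  have hunit : IsUnit (fderiv ℝ (ft 1) θ) :=
    ContinuousLinearMap.isUnit_iff_bijective.2 (hftbij 1 (by simp) θ)
  rw [hvec, ← mul_apply_eq_comp, Ring.mul_inverse_cancel _ hunit,
    one_apply_eq_self]
  ext i
  simp [hy]
end
end

section
/- Convergence of the loss-of-domain series: Let Δ be a Rüssmann approximation function, Λ(t) = tΔ(t), let 0 < q < 1, Λ₀ = Λ(τ₀) with Λ(τ₀) ≥ q⁻¹, and define τ_ν = sup{τ : Λ(τ) ≤ Λ₀ q^{−ν}} for ν ≥ 0. Then Σ_{ν≥0} 1/τ_ν ≤ (1/log q⁻¹) ∫_{τ₀}^∞ (log Λ(t))/t² dt. Consequently, for 0 < a < 1 and σ_ν defined by 1 − a = e^{−τ_ν σ_ν}, one has Σ_{ν≥0} σ_ν ≤ (log(1−a)/log q) ∫_{τ₀}^∞ (log Λ(t))/t² dt. -/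
/-!
Write `L = log q⁻¹ > 0` and `Λ(t) = t Δ(t)`. If `t` exceeds the supremum `τ_ν`, then
`Λ(t) > Λ₀ q^{-ν} ≥ q^{-(ν+1)}`, that is `(ν + 1) L ≤ log Λ(t)`. Hence at most `log Λ(t) / L`
of the `τ_ν` lie below `t` (`sum_indicator_mul_le`). Since `1/τ_ν` is the integral of `1/t²` over
`(τ_ν, ∞)`, summing over `ν < n` and exchanging the finite sum with the integral bounds every
partial sum of `∑ 1/τ_ν` by `L⁻¹ ∫ log Λ(t)/t²`; the integral converges because `log t / t²` and
`log Δ(t) / t²` are integrable. This argument needs neither the continuity of `Λ` nor the identity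
`Λ(τ_ν) = Λ₀ q^{-ν}`. The second series is the first one times `-log(1 - a)`.
-/

open scoped BigOperators
noncomputable section

theorem integrableOn_inv_sq {c : ℝ} (hc : 0 < c) :
    MeasureTheory.IntegrableOn (fun t : ℝ => 1 / t ^ 2) (Set.Ioi c) := by
  refine (integrableOn_Ioi_rpow_of_lt (a := -2) (by norm_num) hc).congr_fun ?_ measurableSet_Ioi
  intro t ht
  have ht' : 0 < t := hc.trans ht
  simp [Real.rpow_neg ht'.le]

theorem integral_inv_sq {c : ℝ} (hc : 0 < c) :
    ∫ t in Set.Ioi c, 1 / t ^ 2 = 1 / c := by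
  have h := integral_Ioi_rpow_of_lt (a := -2) (by norm_num) hc
  rw [MeasureTheory.setIntegral_congr_fun (g := fun t : ℝ => t ^ (-2 : ℝ)) measurableSet_Ioi, h]
  · norm_num [Real.rpow_neg hc.le]
  · intro t ht
    have ht' : 0 < t := hc.trans ht
    simp [Real.rpow_neg ht'.le]

/-- The logarithm is dominated by `2 √t`, so `log t / t²` is dominated by `2 t^{-3/2}`. -/
theorem integrableOn_log_div_sq {c : ℝ} (hc : 1 ≤ c) :
    MeasureTheory.IntegrableOn (fun t : ℝ => Real.log t / t ^ 2) (Set.Ioi c) := by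
  have hc0 : 0 < c := one_pos.trans_le hc
  refine MeasureTheory.Integrable.mono'
    ((integrableOn_Ioi_rpow_of_lt (a := -3 / 2) (by norm_num) hc0).const_mul 2)
    (Real.measurable_log.div (measurable_id.pow_const 2)).aestronglyMeasurable ?_
  refine (MeasureTheory.ae_restrict_iff' measurableSet_Ioi).2 (.of_forall fun t ht => ?_)
  have ht0 : 0 < t := hc0.trans ht
  have h1 : 0 ≤ Real.log t := Real.log_nonneg (hc.trans (le_of_lt ht))
  have h2 := Real.log_le_rpow_div ht0.le (ε := 1 / 2) (by norm_num)
  rw [Real.norm_of_nonneg (by positivity), div_le_iff₀ (by positivity)]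
  have h3 : t ^ (-3 / 2 : ℝ) * t ^ 2 = t ^ (1 / 2 : ℝ) := by
    rw [← Real.rpow_natCast t 2, ← Real.rpow_add ht0]
    norm_num
  rw [mul_assoc, h3]
  linarith

theorem integrableOn_log_mul_div_sq {Δ : ℝ → ℝ} (hΔ : IsApproxFn Δ) {c : ℝ} (hc : 1 ≤ c) :
    MeasureTheory.IntegrableOn (fun t => Real.log (t * Δ t) / t ^ 2) (Set.Ioi c) := by
  refine ((integrableOn_log_div_sq hc).add (hΔ.conv.mono_set
    (fun t ht => hc.trans (le_of_lt ht)))).congr_fun ?_ measurableSet_Ioi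
  intro t ht
  have ht1 : 1 ≤ t := hc.trans (le_of_lt ht)
  have hD := hΔ.one_le t ht1
  simp only [Pi.add_apply]
  rw [Real.log_mul (by positivity) (by positivity), add_div]

/-- If `t > τ_ν` forces `(ν + 1) L ≤ l`, then at most `l / L` of the `τ_ν` lie below `t`. -/
theorem sum_indicator_mul_le {τ : ℕ → ℝ} {L l t : ℝ} (hL : 0 ≤ L) (hl : 0 ≤ l)
    (h : ∀ ν : ℕ, τ ν < t → ((ν : ℝ) + 1) * L ≤ l) (n : ℕ) :
    (∑ ν ∈ Finset.range n, (Set.Ioi (τ ν)).indicator (fun _ => (1 : ℝ)) t) * L ≤ l := by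
  induction n with
  | zero => simpa using hl
  | succ n ih =>
    by_cases hn : τ n < t
    · refine le_trans (mul_le_mul_of_nonneg_right ?_ hL) (h n hn)
      have hle : ∀ ν ∈ Finset.range (n + 1),
          (Set.Ioi (τ ν)).indicator (fun _ => (1 : ℝ)) t ≤ 1 := fun ν _ =>
        Set.indicator_le' (fun _ _ => le_rfl) (fun _ _ => zero_le_one) t
      simpa using Finset.sum_le_sum hle
    · rw [Finset.sum_range_succ, Set.indicator_of_notMem (by simpa using hn), add_zero]
      exact ih

/-- Integrated form of `sum_indicator_mul_le`, for a counting bound by a function `l`. -/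
theorem sum_inv_mul_le {τ : ℕ → ℝ} {L τ₀ : ℝ} {l : ℝ → ℝ} (hL : 0 ≤ L) (h0 : 0 < τ₀)
    (hτ : ∀ ν, τ₀ ≤ τ ν) (hl : ∀ t, τ₀ < t → 0 ≤ l t)
    (h : ∀ t, τ₀ < t → ∀ ν : ℕ, τ ν < t → ((ν : ℝ) + 1) * L ≤ l t)
    (hint : MeasureTheory.IntegrableOn (fun t => l t / t ^ 2) (Set.Ioi τ₀)) (n : ℕ) :
    (∑ ν ∈ Finset.range n, 1 / τ ν) * L ≤ ∫ t in Set.Ioi τ₀, l t / t ^ 2 := by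
  have hI : ∀ ν, MeasureTheory.IntegrableOn
      ((Set.Ioi (τ ν)).indicator (fun t : ℝ => 1 / t ^ 2)) (Set.Ioi τ₀) := fun ν =>
    (integrableOn_inv_sq h0).indicator measurableSet_Ioi
  have hone : ∀ ν, 1 / τ ν =
      ∫ t in Set.Ioi τ₀, (Set.Ioi (τ ν)).indicator (fun t : ℝ => 1 / t ^ 2) t := by
    intro ν
    rw [MeasureTheory.setIntegral_indicator measurableSet_Ioi,
      Set.inter_eq_self_of_subset_right (Set.Ioi_subset_Ioi (hτ ν)),
      integral_inv_sq (h0.trans_le (hτ ν))]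
  rw [Finset.sum_congr rfl fun ν _ => hone ν, ← MeasureTheory.integral_finsetSum _ fun ν _ => hI ν,
    ← MeasureTheory.integral_mul_const]
  refine MeasureTheory.setIntegral_mono_on
    ((MeasureTheory.integrable_finsetSum _ fun ν _ => hI ν).mul_const L) hint
    measurableSet_Ioi fun t ht => ?_
  have ht0 : 0 < t := h0.trans ht
  have key := sum_indicator_mul_le hL (hl t ht) (h t ht) n
  have heq : ∀ ν, (Set.Ioi (τ ν)).indicator (fun t : ℝ => 1 / t ^ 2) t =
      (Set.Ioi (τ ν)).indicator (fun _ => (1 : ℝ)) t / t ^ 2 := by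
    intro ν
    by_cases hν : t ∈ Set.Ioi (τ ν) <;> simp [hν]
  rw [Finset.sum_congr rfl fun ν _ => heq ν, ← Finset.sum_div, div_mul_eq_mul_div]
  gcongr

/-- **Convergence of the loss-of-domain series.**
With `Λ(t) = tΔ(t)`, `0 < q < 1`, `Λ₀ = Λ(τ₀) ≥ q⁻¹` and
`τ_ν = sup{τ : Λ(τ) ≤ Λ₀ q^{−ν}}`, one has
`Σ_{ν≥0} 1/τ_ν ≤ (1/log q⁻¹) ∫_{τ₀}^∞ log Λ(t)/t² dt`; consequently for `0 < a < 1`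
and `σ_ν` defined by `1 − a = e^{−τ_ν σ_ν}`,
`Σ_{ν≥0} σ_ν ≤ (log(1−a)/log q) ∫_{τ₀}^∞ log Λ(t)/t² dt`. -/
theorem loss_of_domain_series (Δ : ℝ → ℝ) (hΔ : IsApproxFn Δ)
    (q τ₀ a : ℝ) (hq0 : 0 < q) (hq1 : q < 1)
    (hτ₀ : 1 ≤ τ₀) (hΛτ₀ : q⁻¹ ≤ τ₀ * Δ τ₀)
    (ha0 : 0 < a) (ha1 : a < 1)
    (τν σν : ℕ → ℝ)
    (hτν : ∀ ν : ℕ, τν ν = sSup {t : ℝ | 1 ≤ t ∧ t * Δ t ≤ τ₀ * Δ τ₀ / q ^ ν})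
    (hσν : ∀ ν : ℕ, 1 - a = Real.exp (-(τν ν * σν ν))) :
    (Summable fun ν => 1 / τν ν) ∧
    ((∑' ν : ℕ, 1 / τν ν) ≤
      1 / Real.log q⁻¹ * ∫ t in Set.Ioi τ₀, Real.log (t * Δ t) / t ^ 2) ∧
    Summable σν ∧
    ((∑' ν : ℕ, σν ν) ≤
      Real.log (1 - a) / Real.log q * ∫ t in Set.Ioi τ₀, Real.log (t * Δ t) / t ^ 2) := by
  have hτ₀0 : 0 < τ₀ := one_pos.trans_le hτ₀
  set L := Real.log q⁻¹ with hLdef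
  have hL : 0 < L := Real.log_pos ((one_lt_inv₀ hq0).2 hq1)
  have hLq : Real.log q = -L := by rw [hLdef, Real.log_inv, neg_neg]
  have hΛ0 : 0 < τ₀ * Δ τ₀ := (inv_pos.2 hq0).trans_le hΛτ₀
  -- `Δ ≥ 1` keeps each set below `Λ₀ q^{-ν}`, so its supremum is not a junk value.
  have hbdd : ∀ ν : ℕ, BddAbove {t : ℝ | 1 ≤ t ∧ t * Δ t ≤ τ₀ * Δ τ₀ / q ^ ν} := by
    refine fun ν => ⟨τ₀ * Δ τ₀ / q ^ ν, fun t ht => le_trans ?_ ht.2⟩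
    exact le_mul_of_one_le_right (zero_le_one.trans ht.1) (hΔ.one_le t ht.1)
  have hτle : ∀ ν, τ₀ ≤ τν ν := by
    intro ν
    rw [hτν ν]
    refine le_csSup (hbdd ν) ⟨hτ₀, ?_⟩
    exact le_div_self hΛ0.le (pow_pos hq0 ν) (pow_le_one₀ hq0.le hq1.le)
  have hτpos : ∀ ν, 0 < τν ν := fun ν => hτ₀0.trans_le (hτle ν)
  have hlog : ∀ t, τ₀ < t → 0 ≤ Real.log (t * Δ t) := fun t ht => by
    have ht1 : 1 ≤ t := hτ₀.trans ht.le
    exact Real.log_nonneg (one_le_mul_of_one_le_of_one_le ht1 (hΔ.one_le t ht1))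
  have hcount : ∀ t, τ₀ < t → ∀ ν : ℕ, τν ν < t →
      ((ν : ℝ) + 1) * L ≤ Real.log (t * Δ t) := by
    intro t ht ν hν
    have ht1 : 1 ≤ t := hτ₀.trans ht.le
    have hgt : τ₀ * Δ τ₀ / q ^ ν < t * Δ t := by
      by_contra! hle
      rw [hτν ν] at hν
      exact absurd (le_csSup (hbdd ν) ⟨ht1, hle⟩) hν.not_ge
    have hpow : q⁻¹ ^ (ν + 1) ≤ t * Δ t := by
      refine le_trans ?_ hgt.le
      rw [pow_succ', inv_pow, div_eq_mul_inv]
      have := pow_pos hq0 ν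
      gcongr
    have := Real.log_le_log (pow_pos (inv_pos.2 hq0) _) hpow
    rw [Real.log_pow] at this
    push_cast at this
    exact this
  set I := ∫ t in Set.Ioi τ₀, Real.log (t * Δ t) / t ^ 2 with hI
  have hpartial : ∀ n : ℕ, ∑ ν ∈ Finset.range n, 1 / τν ν ≤ 1 / L * I := by
    intro n
    rw [one_div_mul_eq_div, le_div_iff₀ hL]
    exact sum_inv_mul_le hL.le hτ₀0 hτle hlog hcount (integrableOn_log_mul_div_sq hΔ hτ₀) n
  have hnn : ∀ ν, 0 ≤ 1 / τν ν := fun ν => (one_div_pos.2 (hτpos ν)).le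
  have hsum : Summable fun ν => 1 / τν ν := summable_of_sum_range_le hnn hpartial
  have htsum : (∑' ν : ℕ, 1 / τν ν) ≤ 1 / L * I := Real.tsum_le_of_sum_range_le hnn hpartial
  have hσ : σν = fun ν => -Real.log (1 - a) * (1 / τν ν) := by
    funext ν
    have hne := (hτpos ν).ne'
    rw [hσν ν, Real.log_exp]
    field_simp
  have hloga : 0 ≤ -Real.log (1 - a) :=
    neg_nonneg.2 (Real.log_nonpos (by linarith) (by linarith))
  refine ⟨hsum, htsum, hσ ▸ hsum.mul_left _, ?_⟩
  rw [hσ, tsum_mul_left, hLq, div_neg, ← neg_div]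
  calc -Real.log (1 - a) * ∑' ν : ℕ, 1 / τν ν ≤ -Real.log (1 - a) * (1 / L * I) :=
        mul_le_mul_of_nonneg_left htsum hloga
    _ = -Real.log (1 - a) / L * I := by ring
end
end

section
/- Flow estimate: Let F be an analytic vector field on 𝕋ⁿ with ‖F‖_{s−σ} ≤ σ for some 0 < 2σ < s. Then F generates a flow F_t which for 0 ≤ t ≤ 1 maps D_{s−2σ} into D_{s−σ}, and satisfies ‖F_t − id‖_{s−2σ} ≤ ‖F‖_{s−σ}. -/
/-!
The flow is obtained orbit by orbit from the Picard–Lindelöf theorem. On the strip `|Im θ| ≤ c` the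
modulus of `e^{i⟨k,θ⟩}` is at most `e^{|k|c}`, so `F` is bounded by `‖F‖_c` there
(`norm_evalVF_le`). On every strictly smaller strip `F` is moreover Lipschitz
(`norm_evalVF_sub_le`): differentiating costs a factor `|k|`, which the geometric gap between the
two strips absorbs through `|k| e^{-|k|δ} ≤ 1/δ`.

If `|Im θ| = ρ < s - 2σ`, put `δ = s - 2σ - ρ`. The closed ball of radius `σ + δ/2` around `θ` lies
in a strip strictly smaller than `D_{s-σ}`, and `|F| ≤ σ` on it; hence a solution starting at `θ`
exists and stays in that ball on the time interval `[-δ/(2σ), 1 + δ/(2σ)]`. This interval contains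
`[0, 1]` in its interior, so the derivatives at times `0` and `1` are two-sided. The mean value
inequality gives `|F_t θ - θ| ≤ t ‖F‖_{s-σ}`, and since `‖F‖_{s-σ} ≤ σ` the imaginary part
grows by at most `σ`.
-/

open scoped BigOperators
noncomputable section

/-- Evaluation of the vector field `P = Σ_k p_k e^{i⟨k,θ⟩}` at a point `θ`. -/
def evalVF {n : ℕ} (p : (Fin n → ℤ) → (Fin n → ℂ)) (θ : Fin n → ℂ) : Fin n → ℂ :=
  ∑' k, Complex.exp (Complex.I * ∑ i, (k i : ℂ) * θ i) • p k

lemma abs_im_le_norm_im {n : ℕ} (θ : Fin n → ℂ) (i : Fin n) :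
    |(θ i).im| ≤ ‖fun i => (θ i).im‖ :=
  norm_le_pi_norm (fun i => (θ i).im) i

lemma norm_im_le_add {n : ℕ} (θ w : Fin n → ℂ) :
    ‖fun i => (w i).im‖ ≤ ‖fun i => (θ i).im‖ + ‖w - θ‖ := by
  refine (pi_norm_le_iff_of_nonneg (by positivity)).2 fun i => ?_
  have h1 := abs_im_le_norm_im θ i
  have h2 : |(w i - θ i).im| ≤ ‖w - θ‖ :=
    (Complex.abs_im_le_norm _).trans (norm_le_pi_norm (w - θ) i)
  have h3 : (w i).im = (θ i).im + (w i - θ i).im := by simp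
  rw [Real.norm_eq_abs, h3]
  exact (abs_add_le _ _).trans (add_le_add h1 h2)

lemma abs_im_pairing_le {n : ℕ} (k : Fin n → ℤ) {θ : Fin n → ℂ} {c : ℝ}
    (hθ : ‖fun i => (θ i).im‖ ≤ c) : |(∑ i, (k i : ℂ) * θ i).im| ≤ znorm k * c := by
  rw [Complex.im_sum, znorm, Finset.sum_mul]
  refine (Finset.abs_sum_le_sum_abs _ _).trans (Finset.sum_le_sum fun i _ => ?_)
  have : ((k i : ℂ) * θ i).im = (k i : ℝ) * (θ i).im := by simp [Complex.mul_im]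
  rw [this, abs_mul]
  exact mul_le_mul_of_nonneg_left ((abs_im_le_norm_im θ i).trans hθ) (abs_nonneg _)

lemma norm_pairing_sub_le {n : ℕ} (k : Fin n → ℤ) (z w : Fin n → ℂ) :
    ‖∑ i, (k i : ℂ) * z i - ∑ i, (k i : ℂ) * w i‖ ≤ znorm k * ‖z - w‖ := by
  rw [← Finset.sum_sub_distrib, znorm, Finset.sum_mul]
  refine (norm_sum_le _ _).trans (Finset.sum_le_sum fun i _ => ?_)
  rw [← mul_sub, norm_mul, Complex.norm_intCast]
  exact mul_le_mul_of_nonneg_left (norm_le_pi_norm (z - w) i) (abs_nonneg _)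

lemma norm_exp_I_mul_le {a : ℂ} {C : ℝ} (ha : |a.im| ≤ C) :
    ‖Complex.exp (Complex.I * a)‖ ≤ Real.exp C := by
  rw [Complex.norm_exp, Real.exp_le_exp]
  simpa using (neg_le_abs _).trans ha

lemma norm_exp_I_mul_sub_le {a b : ℂ} {C : ℝ} (ha : |a.im| ≤ C) (hb : |b.im| ≤ C) :
    ‖Complex.exp (Complex.I * a) - Complex.exp (Complex.I * b)‖ ≤ Real.exp C * ‖a - b‖ := by
  have hconv : Convex ℝ {z : ℂ | |z.im| ≤ C} := by
    have : {z : ℂ | |z.im| ≤ C} = Complex.imLm ⁻¹' Set.Icc (-C) C := by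
      ext z; simp [abs_le]
    rw [this]
    exact (convex_Icc _ _).linear_preimage _
  refine hconv.norm_image_sub_le_of_norm_hasDerivWithin_le
    (f := fun z => Complex.exp (Complex.I * z))
    (f' := fun z => Complex.exp (Complex.I * z) * (Complex.I * 1))
    (fun z _ => ((hasDerivAt_id z).const_mul Complex.I).cexp.hasDerivWithinAt)
    (fun z hz => ?_) hb ha
  simpa using norm_exp_I_mul_le hz

lemma norm_term_le {n : ℕ} (f : (Fin n → ℤ) → (Fin n → ℂ)) {c : ℝ} {θ : Fin n → ℂ}
    (hθ : ‖fun i => (θ i).im‖ ≤ c) (k : Fin n → ℤ) :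
    ‖Complex.exp (Complex.I * ∑ i, (k i : ℂ) * θ i) • f k‖ ≤ ‖f k‖ * Real.exp (znorm k * c) := by
  rw [norm_smul, mul_comm]
  exact mul_le_mul_of_nonneg_left (norm_exp_I_mul_le (abs_im_pairing_le k hθ)) (norm_nonneg _)

lemma norm_evalVF_le {n : ℕ} (f : (Fin n → ℤ) → (Fin n → ℂ)) {c : ℝ}
    (hsum : Summable fun k => ‖f k‖ * Real.exp (znorm k * c)) {θ : Fin n → ℂ}
    (hθ : ‖fun i => (θ i).im‖ ≤ c) : ‖evalVF f θ‖ ≤ wnorm f c :=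
  tsum_of_norm_bounded hsum.hasSum (norm_term_le f hθ)

/-- A Cauchy-type estimate: losing a width `δ` of the strip bounds the Lipschitz constant of the
vector field by `‖F‖ / δ`. -/
lemma norm_evalVF_sub_le {n : ℕ} (f : (Fin n → ℤ) → (Fin n → ℂ)) {c δ : ℝ} (hδ : 0 < δ)
    (hsum : Summable fun k => ‖f k‖ * Real.exp (znorm k * c)) {z w : Fin n → ℂ}
    (hz : ‖fun i => (z i).im‖ ≤ c - δ) (hw : ‖fun i => (w i).im‖ ≤ c - δ) :
    ‖evalVF f z - evalVF f w‖ ≤ wnorm f c / δ * ‖z - w‖ := by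
  have hs : ∀ {θ : Fin n → ℂ}, ‖fun i => (θ i).im‖ ≤ c - δ →
      Summable fun k => Complex.exp (Complex.I * ∑ i, (k i : ℂ) * θ i) • f k := fun h =>
    Summable.of_norm_bounded hsum (norm_term_le f (h.trans (by linarith)))
  rw [evalVF, evalVF, ← (hs hz).tsum_sub (hs hw), div_mul_eq_mul_div, mul_div_assoc]
  refine tsum_of_norm_bounded (hsum.hasSum.mul_right _) fun k => ?_
  rw [← sub_smul, norm_smul]
  have h1 := norm_exp_I_mul_sub_le (abs_im_pairing_le k hz) (abs_im_pairing_le k hw)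
  have h2 := norm_pairing_sub_le k z w
  have h3 : znorm k * δ ≤ Real.exp (znorm k * δ) := by
    linarith [Real.add_one_le_exp (znorm k * δ)]
  have h4 : Real.exp (znorm k * (c - δ)) * znorm k ≤ Real.exp (znorm k * c) / δ := by
    rw [le_div_iff₀ hδ, mul_assoc]
    calc _ ≤ Real.exp (znorm k * (c - δ)) * Real.exp (znorm k * δ) := by gcongr
      _ = _ := by rw [← Real.exp_add]; ring_nf
  calc _ ≤ (Real.exp (znorm k * (c - δ)) * (znorm k * ‖z - w‖)) * ‖f k‖ := by
        gcongr
        exact h1.trans (by gcongr)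
    _ = (Real.exp (znorm k * (c - δ)) * znorm k) * (‖z - w‖ * ‖f k‖) := by ring
    _ ≤ (Real.exp (znorm k * c) / δ) * (‖z - w‖ * ‖f k‖) := by gcongr
    _ = _ := by ring

/-- The autonomous Picard–Lindelöf theorem, with the additional information that the solution does
not leave the ball on which the vector field is controlled. -/
lemma exists_solution_mem_closedBall {E : Type*} [NormedAddCommGroup E] [NormedSpace ℝ E]
    [CompleteSpace E] {F : E → E} {x : E} {a L K : NNReal} {η : ℝ} (hη : 0 < η)
    (hb : ∀ y ∈ Metric.closedBall x a, ‖F y‖ ≤ L)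
    (hl : LipschitzOnWith K F (Metric.closedBall x a)) (hm : L * (1 + η) ≤ a) :
    ∃ α : ℝ → E, α 0 = x ∧ (∀ t, α t ∈ Metric.closedBall x a) ∧
      ∀ t ∈ Set.Icc (0 : ℝ) 1, HasDerivAt α (F (α t)) t := by
  have h0 : (0 : ℝ) ∈ Set.Icc (-η) (1 + η) := ⟨by linarith, by linarith⟩
  have hf : IsPicardLindelof (fun _ => F) (⟨0, h0⟩ : Set.Icc (-η) (1 + η)) x a 0 L K := by
    refine .of_time_independent hb hl ?_
    have : max (1 + η - 0) (0 - -η) = 1 + η := by rw [max_eq_left] <;> linarith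
    simpa [this] using hm
  have hx : x ∈ Metric.closedBall x ((0 : NNReal) : ℝ) := by simp
  obtain ⟨α, hα⟩ := ODE.FunSpace.exists_isFixedPt_next hf hx
  have hmem : ∀ t, α.compProj t ∈ Metric.closedBall x a := fun t =>
    α.compProj_mem_closedBall hf.mul_max_le
  have hfix : ∀ t ∈ Set.Icc (-η) (1 + η),
      α.compProj t = ODE.picard (fun _ => F) 0 x α.compProj t := fun t ht => by
    rw [ODE.FunSpace.compProj_of_mem ht]
    exact (ODE.FunSpace.isFixedPt_next_iff hf hx).1 hα ⟨t, ht⟩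
  refine ⟨α.compProj, by rw [hfix 0 h0, ODE.picard_apply₀], hmem, fun t ht => ?_⟩
  have ht' : t ∈ Set.Icc (-η) (1 + η) := ⟨by linarith [ht.1], by linarith [ht.2]⟩
  have hd := ODE.hasDerivWithinAt_picard_Icc h0 hf.continuousOn_uncurry
    α.continuous_compProj.continuousOn (fun s _ => hmem s) x ht'
  exact (hd.congr hfix (hfix t ht')).hasDerivAt
    (Icc_mem_nhds (by linarith [ht.1]) (by linarith [ht.2]))

lemma exists_orbit {n : ℕ} (s σ : ℝ) (hσ : 0 < σ)
    (f : (Fin n → ℤ) → (Fin n → ℂ))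
    (hsum : Summable fun k => ‖f k‖ * Real.exp (znorm k * (s - σ)))
    (hF : wnorm f (s - σ) ≤ σ) (θ : Fin n → ℂ) (hθ : θ ∈ Dset n (s - 2 * σ)) :
    ∃ α : ℝ → (Fin n → ℂ), α 0 = θ ∧
      (∀ t ∈ Set.Icc (0 : ℝ) 1, HasDerivAt α (evalVF f (α t)) t) ∧
      (∀ t ∈ Set.Icc (0 : ℝ) 1, ‖α t - θ‖ ≤ wnorm f (s - σ)) := by
  have hM : 0 ≤ wnorm f (s - σ) := tsum_nonneg fun k => by positivity
  obtain ⟨δ, hδ⟩ : ∃ δ, δ = s - 2 * σ - ‖fun i => (θ i).im‖ := ⟨_, rfl⟩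
  have hδ0 : 0 < δ := by
    have : ‖fun i => (θ i).im‖ < s - 2 * σ := hθ
    linarith
  have hball : ∀ y ∈ Metric.closedBall θ (σ + δ / 2),
      ‖fun i => (y i).im‖ ≤ s - σ - δ / 2 := fun y hy => by
    rw [mem_closedBall_iff_norm] at hy
    linarith [norm_im_le_add θ y]
  obtain ⟨α, h0, hmem, hα⟩ := exists_solution_mem_closedBall (F := evalVF f) (x := θ)
    (a := ⟨σ + δ / 2, by positivity⟩) (L := ⟨σ, hσ.le⟩)
    (K := ⟨wnorm f (s - σ) / (δ / 2), by positivity⟩) (η := δ / (2 * σ)) (by positivity)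
    (fun y hy => (norm_evalVF_le f hsum ((hball y hy).trans (by linarith))).trans hF)
    (LipschitzOnWith.of_dist_le_mul fun y hy z hz => by
      rw [dist_eq_norm, dist_eq_norm]
      exact norm_evalVF_sub_le f (half_pos hδ0) hsum (hball y hy) (hball z hz))
    (le_of_eq (by
      change σ * (1 + δ / (2 * σ)) = σ + δ / 2
      field_simp))
  refine ⟨α, h0, hα, fun t ht => ?_⟩
  have h := norm_image_sub_le_of_norm_deriv_le_segment' (C := wnorm f (s - σ))
    (fun u hu => (hα u hu).hasDerivWithinAt)
    (fun u _ => norm_evalVF_le f hsum ((hball _ (hmem u)).trans (by linarith))) t ht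
  rw [h0, sub_zero] at h
  exact h.trans (mul_le_of_le_one_right hM ht.2)

/-- **Flow estimate.**
If `F` is an analytic vector field on `𝕋ⁿ` with `‖F‖_{s−σ} ≤ σ`, `0 < 2σ < s`, then `F`
generates a flow `F_t` which for `0 ≤ t ≤ 1` maps `D_{s−2σ}` into `D_{s−σ}` and satisfies
`‖F_t − id‖_{s−2σ} ≤ ‖F‖_{s−σ}`. -/
theorem flow_estimate {n : ℕ} (s σ : ℝ) (hσ : 0 < σ) (hs : 2 * σ < s)
    (f : (Fin n → ℤ) → (Fin n → ℂ))
    (hsum : Summable fun k => ‖f k‖ * Real.exp (znorm k * (s - σ)))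
    (hF : wnorm f (s - σ) ≤ σ) :
    ∃ ft : ℝ → (Fin n → ℂ) → (Fin n → ℂ),
      (∀ θ ∈ Dset n (s - 2 * σ), ft 0 θ = θ) ∧
      (∀ t ∈ Set.Icc (0:ℝ) 1, ∀ θ ∈ Dset n (s - 2 * σ),
        HasDerivAt (fun u => ft u θ) (evalVF f (ft t θ)) t) ∧
      (∀ t ∈ Set.Icc (0:ℝ) 1, Set.MapsTo (ft t) (Dset n (s - 2 * σ)) (Dset n (s - σ))) ∧
      (∀ t ∈ Set.Icc (0:ℝ) 1, ∀ θ ∈ Dset n (s - 2 * σ), ‖ft t θ - θ‖ ≤ wnorm f (s - σ)) := by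
  choose! α h0 hα hd using exists_orbit s σ hσ f hsum hF
  refine ⟨fun t θ => α θ t, h0, fun t ht θ hθ => hα θ hθ t ht, fun t ht θ hθ => ?_,
    fun t ht θ hθ => hd θ hθ t ht⟩
  have h1 : ‖fun i => (θ i).im‖ < s - 2 * σ := hθ
  have h2 := norm_im_le_add θ (α θ t)
  change ‖fun i => (α θ t i).im‖ < s - σ
  linarith [hd θ hθ t ht]
end
end
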